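/- arXiv:1605.05094 — 11 statements merged into one kernel-verified Lean document; each statement's English description precedes it below -/
import Mathlib

section
/- (Mazur–Orlicz theorem) Let Z be a nonzero real vector space, let ρ : Z → ℝ be sublinear, and let D be a nonempty convex subset of Z. Then there exists a linear functional L : Z → ℝ such that L(z) ≤ ρ(z) for all z ∈ Z and inf_{z ∈ D} L(z) = inf_{z ∈ D} ρ(z) (an equality of infima in the extended real numbers). -/
theorem mo_aux {Z : Type*} [AddCommGroup Z] [Module ℝ Z]
    (ρ : Z → ℝ)
    (hsub : ∀ x y : Z, ρ (x + y) ≤ ρ x + ρ y)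
    (hhom : ∀ c : ℝ, 0 ≤ c → ∀ x : Z, ρ (c • x) = c * ρ x) :
    ∃ L : Z →ₗ[ℝ] ℝ, (∀ z : Z, L z ≤ ρ z) := by
  have h0 : ρ 0 = 0 := by simpa using hhom 0 le_rfl 0
  obtain ⟨g, -, hg⟩ := exists_extension_of_le_sublinear (⊥ : Z →ₗ.[ℝ] ℝ) ρ
    (fun c hc x => hhom c hc.le x) hsub (by
      rintro ⟨x, hx⟩
      have hx' : x = 0 := (Submodule.mem_bot ℝ).1 hx
      subst hx'
      have : (⟨0, hx⟩ : (⊥ : Z →ₗ.[ℝ] ℝ).domain) = 0 := rfl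
      rw [this, LinearPMap.map_zero]
      simp [h0])
  exact ⟨g, hg⟩

theorem mo_bdd {Z : Type*} [AddCommGroup Z] [Module ℝ Z]
    (ρ : Z → ℝ)
    (hsub : ∀ x y : Z, ρ (x + y) ≤ ρ x + ρ y)
    (hhom : ∀ c : ℝ, 0 ≤ c → ∀ x : Z, ρ (c • x) = c * ρ x)
    (D : Set Z) (hD : D.Nonempty) (hconv : Convex ℝ D) (β : ℝ) (hβ : ∀ d ∈ D, β ≤ ρ d) :
    ∃ L : Z →ₗ[ℝ] ℝ, (∀ z : Z, L z ≤ ρ z) ∧ ∀ d ∈ D, β ≤ L d := by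
  have h0 : ρ 0 = 0 := by simpa using hhom 0 le_rfl 0
  obtain ⟨d₀, hd₀⟩ := hD
  let S : Z → Set ℝ := fun x => {r | ∃ d ∈ D, ∃ t : ℝ, 0 ≤ t ∧ r = ρ (x + t • d) - t * β}
  have hbdd : ∀ x, BddBelow (S x) := by
    intro x
    refine ⟨-ρ (-x), ?_⟩
    rintro r ⟨d, hd, t, ht, rfl⟩
    have h1 := hsub (x + t • d) (-x)
    rw [show x + t • d + -x = t • d by abel, hhom t ht] at h1
    have h2 := mul_le_mul_of_nonneg_left (hβ d hd) ht
    linarith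
  have hρS : ∀ x, ρ x ∈ S x := fun x => ⟨d₀, hd₀, 0, le_rfl, by simp⟩
  have hne : ∀ x, (S x).Nonempty := fun x => ⟨_, hρS x⟩
  have hsm : ∀ c : ℝ, 0 < c → ∀ x, ∀ r ∈ S x, c * r ∈ S (c • x) := by
    rintro c hc x r ⟨d, hd, t, ht, rfl⟩
    refine ⟨d, hd, c * t, by positivity, ?_⟩
    rw [mul_smul, ← smul_add, hhom c hc.le]
    ring
  have hle : ∀ c : ℝ, 0 < c → ∀ x, sInf (S (c • x)) ≤ c * sInf (S x) := by
    intro c hc x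
    rw [mul_comm, ← div_le_iff₀ hc]
    refine le_csInf (hne x) fun r hr => ?_
    rw [div_le_iff₀ hc, mul_comm]
    exact csInf_le (hbdd _) (hsm c hc x r hr)
  obtain ⟨L, hL⟩ := mo_aux (fun x => sInf (S x)) (by
      intro x y
      have key : ∀ r ∈ S x, ∀ s ∈ S y, sInf (S (x + y)) ≤ r + s := by
        rintro r ⟨d, hd, t, ht, rfl⟩ s ⟨e, he, u, hu, rfl⟩
        have hex : ∃ f ∈ D, (t + u) • f = t • d + u • e := by
          rcases (add_nonneg ht hu).eq_or_lt with h | h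
          · have ht0 : t = 0 := by linarith
            have hu0 : u = 0 := by linarith
            exact ⟨d, hd, by simp [ht0, hu0]⟩
          · refine ⟨(t / (t + u)) • d + (u / (t + u)) • e,
              hconv hd he (by positivity) (by positivity) (by field_simp), ?_⟩
            rw [smul_add, smul_smul, smul_smul, mul_div_cancel₀ _ h.ne', mul_div_cancel₀ _ h.ne']
        obtain ⟨f, hf, hfe⟩ := hex
        refine (csInf_le (hbdd _) ⟨f, hf, t + u, by positivity, rfl⟩).trans ?_
        have h1 := hsub (x + t • d) (y + u • e)
        rw [show x + t • d + (y + u • e) = x + y + (t • d + u • e) by abel, ← hfe] at h1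
        linarith
      have h1 : sInf (S (x + y)) - sInf (S y) ≤ sInf (S x) := by
        refine le_csInf (hne x) fun r hr => ?_
        have : sInf (S (x + y)) - r ≤ sInf (S y) :=
          le_csInf (hne y) fun s hs => by linarith [key r hr s hs]
        linarith
      show sInf (S (x + y)) ≤ sInf (S x) + sInf (S y)
      linarith) (by
      intro c hc x
      show sInf (S (c • x)) = c * sInf (S x)
      rcases hc.eq_or_lt with rfl | hc
      · rw [zero_smul, zero_mul]
        apply le_antisymm
        · exact (csInf_le (hbdd 0) (hρS 0)).trans h0.le
        · refine le_csInf (hne 0) ?_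
          rintro r ⟨d, hd, t, ht, rfl⟩
          rw [zero_add, hhom t ht]
          have h2 := mul_le_mul_of_nonneg_left (hβ d hd) ht
          linarith
      · apply le_antisymm (hle c hc x)
        have h := hle c⁻¹ (inv_pos.2 hc) (c • x)
        rw [inv_smul_smul₀ hc.ne'] at h
        have h3 := mul_le_mul_of_nonneg_left h hc.le
        rwa [mul_inv_cancel_left₀ hc.ne'] at h3)
  refine ⟨L, fun z => (hL z).trans (csInf_le (hbdd z) (hρS z)), fun d hd => ?_⟩
  have h1 : L (-d) ≤ ρ (-d + (1 : ℝ) • d) - 1 * β :=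
    (hL (-d)).trans (csInf_le (hbdd _) ⟨d, hd, 1, zero_le_one, rfl⟩)
  rw [one_smul, neg_add_cancel, h0, map_neg] at h1
  linarith

/-- **Mazur–Orlicz theorem.** Let `Z` be a nonzero real vector space, `ρ : Z → ℝ`
sublinear (subadditive and positively homogeneous) and `D` a nonempty convex subset
of `Z`.  Then there is a linear functional `L` on `Z` with `L z ≤ ρ z` for all `z`
and `⨅_{z ∈ D} L z = ⨅_{z ∈ D} ρ z` (infima taken in the extended reals). -/
theorem mazur_orlicz {Z : Type*} [AddCommGroup Z] [Module ℝ Z] [Nontrivial Z]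
    (ρ : Z → ℝ)
    (hsub : ∀ x y : Z, ρ (x + y) ≤ ρ x + ρ y)
    (hhom : ∀ c : ℝ, 0 ≤ c → ∀ x : Z, ρ (c • x) = c * ρ x)
    (D : Set Z) (hD : D.Nonempty) (hconv : Convex ℝ D) :
    ∃ L : Z →ₗ[ℝ] ℝ, (∀ z : Z, L z ≤ ρ z) ∧
      (⨅ z ∈ D, (L z : EReal)) = ⨅ z ∈ D, (ρ z : EReal) := by
  have hle : ∀ L : Z →ₗ[ℝ] ℝ, (∀ z : Z, L z ≤ ρ z) →
      (⨅ z ∈ D, (L z : EReal)) ≤ ⨅ z ∈ D, (ρ z : EReal) := fun L hL =>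
    iInf₂_mono fun z _ => EReal.coe_le_coe_iff.2 (hL z)
  have hlow : ∀ d ∈ D, (⨅ z ∈ D, (ρ z : EReal)) ≤ (ρ d : EReal) := fun d hd => iInf₂_le d hd
  generalize (⨅ z ∈ D, (ρ z : EReal)) = B at hle hlow ⊢
  induction B with
  | bot =>
    obtain ⟨L, hL⟩ := mo_aux ρ hsub hhom
    exact ⟨L, hL, le_bot_iff.1 (hle L hL)⟩
  | top =>
    obtain ⟨d, hd⟩ := hD
    exact absurd (hlow d hd) (by simp)
  | coe β =>
    obtain ⟨L, hL, hLD⟩ := mo_bdd ρ hsub hhom D hD hconv β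
      (fun d hd => EReal.coe_le_coe_iff.1 (hlow d hd))
    exact ⟨L, hL, le_antisymm (hle L hL)
      (le_iInf₂ fun d hd => EReal.coe_le_coe_iff.2 (hLD d hd))⟩
end

section
/- There exists a linear functional Q_α : 𝒳 → ℝ dominated by E_υ such that sup_{X ∈ 𝒳_α} Q_α(X) = sup_{X ∈ 𝒳_α} E_ῡ[X]; moreover, every linear functional Q_α dominated by E_υ satisfying this equality has Q_α(1) = 1, where 1 denotes the constant function one. -/
open MeasureTheory Filter Topology
open scoped ENNReal

/-- `X` belongs to the space `𝒳` of bounded measurable real-valued functions on `Ω`. -/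
def MemX {Ω : Type*} [MeasurableSpace Ω] (X : Ω → ℝ) : Prop :=
  Measurable X ∧ ∃ M : ℝ, ∀ ω, |X ω| ≤ M

/-- A sublinear operator on `𝒳`: monotone, constant preserving, subadditive and
positively homogeneous. -/
def IsSublinearOp {Ω : Type*} [MeasurableSpace Ω] (ρ : (Ω → ℝ) → ℝ) : Prop :=
  (∀ X Y : Ω → ℝ, MemX X → MemX Y → (∀ ω, Y ω ≤ X ω) → ρ Y ≤ ρ X) ∧
  (∀ c : ℝ, ρ (fun _ => c) = c) ∧
  (∀ X Y : Ω → ℝ, MemX X → MemX Y → ρ (X + Y) ≤ ρ X + ρ Y) ∧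
  (∀ c : ℝ, 0 ≤ c → ∀ X : Ω → ℝ, MemX X → ρ (c • X) = c * ρ X)

/-- A linear functional on `𝒳`. -/
def IsLinearOp {Ω : Type*} [MeasurableSpace Ω] (L : (Ω → ℝ) → ℝ) : Prop :=
  (∀ X Y : Ω → ℝ, MemX X → MemX Y → L (X + Y) = L X + L Y) ∧
  (∀ (c : ℝ) (X : Ω → ℝ), MemX X → L (c • X) = c * L X)

/-- `L` is dominated by `ρ` on `𝒳`. -/
def Dominated {Ω : Type*} [MeasurableSpace Ω] (L ρ : (Ω → ℝ) → ℝ) : Prop :=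
  ∀ X : Ω → ℝ, MemX X → L X ≤ ρ X

/-- The conjugate operator `E_ῡ[X] := -E_υ[-X]`. -/
def conjOp {Ω : Type*} (ρ : (Ω → ℝ) → ℝ) : (Ω → ℝ) → ℝ := fun X => -ρ (-X)

/-- The set `𝒳_α` of test functions at significance level `α`. -/
def testSet {Ω : Type*} [MeasurableSpace Ω] (Emu : (Ω → ℝ) → ℝ) (α : ℝ) : Set (Ω → ℝ) :=
  {X | MemX X ∧ (∀ ω, 0 ≤ X ω ∧ X ω ≤ 1) ∧ Emu X ≤ α}

theorem sandwich_aux {E : Type*} [AddCommGroup E] [Module ℝ E] (N : E → ℝ)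
    (hsub : ∀ x y, N (x + y) ≤ N x + N y) (hhom : ∀ c : ℝ, 0 < c → ∀ x, N (c • x) = c * N x)
    (C : Set (E × ℝ)) (h0 : (0, 0) ∈ C) (hadd : ∀ a ∈ C, ∀ b ∈ C, a + b ∈ C)
    (hsm : ∀ c : ℝ, 0 < c → ∀ a ∈ C, c • a ∈ C) (hN0 : N 0 = 0)
    (hC : ∀ a ∈ C, 0 ≤ N (-a.1) + a.2) :
    ∃ f : E →ₗ[ℝ] ℝ, (∀ x, f x ≤ N x) ∧ ∀ a ∈ C, f a.1 ≤ a.2 := by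
  let F : E → C → ℝ := fun y a => N (y - a.1.1) + a.1.2
  let p : E → ℝ := fun y => ⨅ a, F y a
  have : Nonempty C := ⟨⟨_, h0⟩⟩
  have hbdd : ∀ y, BddBelow (Set.range (F y)) := by
    intro y
    refine ⟨- N (-y), ?_⟩
    rintro _ ⟨a, rfl⟩
    have h1 := hC a.1 a.2
    have h2 := hsub (y - a.1.1) (-y)
    rw [show y - a.1.1 + -y = -a.1.1 by abel] at h2
    simp only [F]; linarith
  have hle : ∀ y a (ha : a ∈ C), p y ≤ N (y - a.1) + a.2 := fun y a ha =>
    ciInf_le (hbdd y) ⟨a, ha⟩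
  have hhom1 : ∀ c : ℝ, 0 < c → ∀ x, p (c • x) ≤ c * p x := by
    intro c hc x
    rw [← div_le_iff₀' hc]
    refine le_ciInf fun a => ?_
    rw [div_le_iff₀' hc]
    have := hle (c • x) _ (hsm c hc a.1 a.2)
    simp only [Prod.smul_fst, Prod.smul_snd, ← smul_sub, hhom c hc, smul_eq_mul] at this
    simp only [F]; linarith
  obtain ⟨g, -, hg⟩ := exists_extension_of_le_sublinear (⊥ : E →ₗ.[ℝ] ℝ) p
    (by
      intro c hc x
      refine le_antisymm (hhom1 c hc x) ?_
      have := hhom1 c⁻¹ (inv_pos.2 hc) (c • x)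
      rw [inv_smul_smul₀ hc.ne'] at this
      rwa [← div_eq_inv_mul, le_div_iff₀' hc] at this)
    (by
      intro x y
      have : ∀ a b, p (x + y) ≤ F x a + F y b := by
        intro a b
        have h1 := hle (x + y) _ (hadd a.1 a.2 b.1 b.2)
        have h2 := hsub (x - a.1.1) (y - b.1.1)
        rw [show x - a.1.1 + (y - b.1.1) = x + y - (a.1 + b.1).1 by
          rw [Prod.fst_add]; abel] at h2
        rw [Prod.snd_add] at h1
        simp only [F]; linarith
      have h3 : ∀ a, p (x + y) - F x a ≤ p y := fun a => le_ciInf fun b => by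
        linarith [this a b]
      have h4 : p (x + y) - p y ≤ p x := le_ciInf fun a => by linarith [h3 a]
      linarith)
    (by
      rintro ⟨x, hx⟩
      have hx0 : x = 0 := (Submodule.mem_bot ℝ).1 hx
      subst hx0
      have e : (⊥ : E →ₗ.[ℝ] ℝ) ⟨0, hx⟩ = 0 := LinearPMap.map_zero _
      rw [e]
      refine le_ciInf fun a => ?_
      have := hC a.1 a.2
      simpa only [F, zero_sub] using this)
  refine ⟨g, fun x => (hg x).trans ?_, fun a ha => (hg _).trans ?_⟩
  · simpa using hle x _ h0
  · simpa [hN0] using hle a.1 a ha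

theorem MemX.add {Ω : Type*} [MeasurableSpace Ω] {X Y : Ω → ℝ} (hX : MemX X) (hY : MemX Y) :
    MemX (X + Y) := by
  obtain ⟨m1, M1, h1⟩ := hX
  obtain ⟨m2, M2, h2⟩ := hY
  exact ⟨m1.add m2, M1 + M2, fun ω => (abs_add_le _ _).trans (add_le_add (h1 ω) (h2 ω))⟩

theorem MemX.smul {Ω : Type*} [MeasurableSpace Ω] {X : Ω → ℝ} (c : ℝ) (hX : MemX X) :
    MemX (c • X) := by
  obtain ⟨m1, M1, h1⟩ := hX
  refine ⟨m1.const_smul c, |c| * M1, fun ω => ?_⟩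
  rw [Pi.smul_apply, smul_eq_mul, abs_mul]
  exact mul_le_mul_of_nonneg_left (h1 ω) (abs_nonneg c)

theorem MemX.const {Ω : Type*} [MeasurableSpace Ω] (c : ℝ) : MemX (fun _ : Ω => c) :=
  ⟨measurable_const, |c|, fun _ => le_rfl⟩

theorem MemX.neg {Ω : Type*} [MeasurableSpace Ω] {X : Ω → ℝ} (hX : MemX X) : MemX (-X) := by
  simpa using hX.smul (-1)

/-- The space of bounded measurable functions as a submodule. -/
def spaceX (Ω : Type*) [MeasurableSpace Ω] : Submodule ℝ (Ω → ℝ) where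
  carrier := {X | MemX X}
  add_mem' := fun hX hY => MemX.add hX hY
  zero_mem' := MemX.const 0
  smul_mem' := fun c _ hX => MemX.smul c hX

/-- Corollary 4.2: there is a linear functional `Q_α` dominated by `E_υ` whose
supremum over `𝒳_α` equals that of `E_ῡ`; moreover every such functional satisfies
`Q_α(1) = 1`. -/
theorem exists_Qalpha_and_total_mass_one {Ω : Type*} [MeasurableSpace Ω]
    (Emu Eups : (Ω → ℝ) → ℝ)
    (hEmu : IsSublinearOp Emu) (hEups : IsSublinearOp Eups)
    (α : ℝ) (hα0 : 0 < α) (hα1 : α < 1) :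
    (∃ Q : (Ω → ℝ) → ℝ, IsLinearOp Q ∧ Dominated Q Eups ∧
        sSup (Q '' testSet Emu α) = sSup (conjOp Eups '' testSet Emu α)) ∧
    (∀ Q : (Ω → ℝ) → ℝ, IsLinearOp Q → Dominated Q Eups →
        sSup (Q '' testSet Emu α) = sSup (conjOp Eups '' testSet Emu α) →
        Q (fun _ => 1) = 1) := by
  obtain ⟨mmono, mconst, madd, mhom⟩ := hEmu
  obtain ⟨umono, uconst, uadd, uhom⟩ := hEups
  constructor
  swap
  · intro Q hQ hd _
    have h1 := hd _ (MemX.const 1)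
    have h2 := hd _ (MemX.const (-1))
    have h3 := hQ.2 (-1) _ (MemX.const (Ω := Ω) 1)
    have h4 : ((-1 : ℝ) • (fun _ : Ω => (1 : ℝ))) = fun _ => -1 := by
      ext; simp
    rw [h4] at h3
    rw [uconst] at h1 h2
    linarith
  have u0 : Eups 0 = 0 := uconst 0
  have m0 : Emu 0 = 0 := mconst 0
  set s := sSup (conjOp Eups '' testSet Emu α) with hs
  have hbound : ∀ X ∈ testSet Emu α, conjOp Eups X ≤ 1 := by
    rintro X ⟨hX, h01, -⟩
    have h1 := umono (-X) (fun _ => -1) hX.neg (MemX.const _)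
      (fun ω => by have := (h01 ω).2; simp only [Pi.neg_apply]; linarith)
    rw [uconst] at h1
    simp only [conjOp]; linarith
  have hbdd : BddAbove (conjOp Eups '' testSet Emu α) := by
    refine ⟨1, ?_⟩
    rintro _ ⟨X, hX, rfl⟩
    exact hbound X hX
  have hle : ∀ X ∈ testSet Emu α, conjOp Eups X ≤ s := fun X hX =>
    le_csSup hbdd ⟨X, hX, rfl⟩
  have h0mem : (0 : Ω → ℝ) ∈ testSet Emu α :=
    ⟨MemX.const 0, fun ω => by simp, by rw [m0]; exact hα0.le⟩
  obtain ⟨g, hg, hgC⟩ := sandwich_aux (E := spaceX Ω) (fun X => Eups X.1)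
    (fun x y => uadd _ _ x.2 y.2) (fun c hc x => uhom c hc.le _ x.2)
    {a | ∃ t : ℝ, 0 ≤ t ∧ a.2 = t * s ∧ (∀ ω, 0 ≤ a.1.1 ω ∧ a.1.1 ω ≤ t) ∧ Emu a.1.1 ≤ t * α}
    ⟨0, le_rfl, by simp, fun ω => by simp, by simp [m0]⟩
    (by
      rintro a ⟨t, ht, h1, h2, h3⟩ b ⟨t', ht', h1', h2', h3'⟩
      refine ⟨t + t', by positivity, ?_, fun ω => ?_, ?_⟩
      · rw [Prod.snd_add, h1, h1']; ring
      · have e : (a + b).1.1 ω = a.1.1 ω + b.1.1 ω := rfl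
        rw [e]
        have := h2 ω
        have := h2' ω
        constructor <;> linarith
      · have := madd _ _ a.1.2 b.1.2
        have e : (a + b).1.1 = a.1.1 + b.1.1 := rfl
        rw [e]; linarith)
    (by
      rintro c hc a ⟨t, ht, h1, h2, h3⟩
      refine ⟨c * t, by positivity, ?_, fun ω => ?_, ?_⟩
      · rw [Prod.smul_snd, h1, smul_eq_mul]; ring
      · have e : (c • a).1.1 ω = c * a.1.1 ω := rfl
        rw [e]
        exact ⟨mul_nonneg hc.le (h2 ω).1, mul_le_mul_of_nonneg_left (h2 ω).2 hc.le⟩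
      · have e : (c • a).1.1 = c • a.1.1 := rfl
        rw [e, mhom c hc.le _ a.1.2, mul_assoc]
        exact mul_le_mul_of_nonneg_left h3 hc.le)
    u0
    (by
      rintro ⟨⟨Z, hZ⟩, r⟩ ⟨t, ht, h1, h2, h3⟩
      simp only at h1 h2 h3
      change 0 ≤ Eups (-Z) + r
      subst h1
      rcases ht.eq_or_lt with rfl | ht
      · have : Z = 0 := by
          ext ω
          exact le_antisymm (h2 ω).2 (h2 ω).1
        subst this
        simp [u0]
      · have hm : t⁻¹ • Z ∈ testSet Emu α := by
          refine ⟨MemX.smul _ hZ, fun ω => ?_, ?_⟩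
          · simp only [Pi.smul_apply, smul_eq_mul]
            rw [← div_eq_inv_mul]
            exact ⟨div_nonneg (h2 ω).1 ht.le, (div_le_one ht).2 (h2 ω).2⟩
          · rw [mhom _ (inv_pos.2 ht).le _ hZ, ← div_eq_inv_mul, div_le_iff₀' ht]
            exact h3
        have h5 := hle _ hm
        simp only [conjOp] at h5
        rw [← smul_neg, uhom _ (inv_pos.2 ht).le _ (MemX.neg hZ), ← mul_neg, ← div_eq_inv_mul,
          div_le_iff₀' ht] at h5
        linarith)
  classical
  let Q : (Ω → ℝ) → ℝ := fun X => if h : MemX X then g ⟨X, h⟩ else 0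
  have hQ : ∀ X (h : MemX X), Q X = g ⟨X, h⟩ := fun X h => dif_pos h
  refine ⟨Q, ⟨fun X Y hX hY => ?_, fun c X hX => ?_⟩, fun X hX => ?_, ?_⟩
  · rw [hQ _ hX, hQ _ hY, hQ _ (hX.add hY), ← map_add]; rfl
  · rw [hQ _ hX, hQ _ (hX.smul c), ← smul_eq_mul, ← map_smul]; rfl
  · rw [hQ _ hX]; exact hg _
  · have hQs : ∀ X ∈ testSet Emu α, Q X ≤ s := by
      rintro X ⟨hX, h01, hm⟩
      rw [hQ _ hX]
      exact hgC (⟨X, hX⟩, s) ⟨1, zero_le_one, by simp, h01, by simpa using hm⟩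
    apply le_antisymm
    · refine csSup_le ⟨_, 0, h0mem, rfl⟩ ?_
      rintro _ ⟨X, hX, rfl⟩
      exact hQs X hX
    · refine csSup_le ⟨_, 0, h0mem, rfl⟩ ?_
      rintro _ ⟨X, hX, rfl⟩
      have h1 : conjOp Eups X ≤ Q X := by
        have h2 := hg (-⟨X, hX.1⟩)
        rw [map_neg, ← hQ X hX.1] at h2
        change -Q X ≤ Eups (-X) at h2
        simp only [conjOp]; linarith
      refine h1.trans (le_csSup ⟨s, ?_⟩ ⟨X, hX, rfl⟩)
      rintro _ ⟨Y, hY, rfl⟩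
      exact hQs Y hY
end

section
/- Let E_μ be a sublinear operator on 𝒳 and let D be a nonempty convex subset of 𝒳. Then there exists a linear functional P_α : 𝒳 → ℝ dominated by E_μ such that inf_{X ∈ D} P_α(X) = inf_{X ∈ D} E_μ[X]. -/
open MeasureTheory Filter Topology
open scoped ENNReal

theorem aux_sandwich {E : Type*} [AddCommGroup E] [Module ℝ E] (ρ : E → ℝ)
    (hadd : ∀ x y, ρ (x + y) ≤ ρ x + ρ y)
    (hhom : ∀ c : ℝ, 0 ≤ c → ∀ x, ρ (c • x) = c * ρ x)
    (D : Set E) (hD : D.Nonempty) (hconv : Convex ℝ D) (m : ℝ) (hm : ∀ Y ∈ D, m ≤ ρ Y) :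
    ∃ g : E →ₗ[ℝ] ℝ, (∀ x, g x ≤ ρ x) ∧ ∀ Y ∈ D, m ≤ g Y := by
  let S : E → Set ℝ := fun x => {r | ∃ t : ℝ, 0 ≤ t ∧ ∃ Y ∈ D, r = ρ (x + t • Y) - t * m}
  have hbdd : ∀ x, BddBelow (S x) := by
    intro x
    refine ⟨-ρ (-x), ?_⟩
    rintro r ⟨t, ht, Y, hY, rfl⟩
    have h1 := hadd (x + t • Y) (-x)
    have h2 : x + t • Y + -x = t • Y := by abel
    rw [h2, hhom t ht] at h1
    have h3 := mul_le_mul_of_nonneg_left (hm Y hY) ht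
    linarith
  have hne : ∀ x, (S x).Nonempty := by
    intro x
    obtain ⟨Y, hY⟩ := hD
    exact ⟨_, 0, le_rfl, Y, hY, rfl⟩
  have hle : ∀ x (t : ℝ), 0 ≤ t → ∀ Y ∈ D, sInf (S x) ≤ ρ (x + t • Y) - t * m :=
    fun x t ht Y hY => csInf_le (hbdd x) ⟨t, ht, Y, hY, rfl⟩
  have hhalf : ∀ c : ℝ, 0 < c → ∀ x, sInf (S (c • x)) ≤ c * sInf (S x) := by
    intro c hc x
    have : c⁻¹ * sInf (S (c • x)) ≤ sInf (S x) := by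
      apply le_csInf (hne x)
      rintro r ⟨t, ht, Y, hY, rfl⟩
      have h := hle (c • x) (c * t) (by positivity) Y hY
      rw [mul_smul, ← smul_add, hhom c hc.le] at h
      rw [inv_mul_le_iff₀ hc]
      linarith
    rwa [inv_mul_le_iff₀ hc] at this
  obtain ⟨g, -, hg⟩ := exists_extension_of_le_sublinear (⊥ : E →ₗ.[ℝ] ℝ) (fun x => sInf (S x))
    (by
      intro c hc x
      apply le_antisymm (hhalf c hc x)
      have h := hhalf c⁻¹ (by positivity) (c • x)
      rw [inv_smul_smul₀ hc.ne'] at h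
      rwa [le_inv_mul_iff₀ hc] at h)
    (by
      intro x y
      have key : ∀ a ∈ S x, ∀ b ∈ S y, sInf (S (x + y)) ≤ a + b := by
        rintro _ ⟨t, ht, Y, hY, rfl⟩ _ ⟨s, hs, Z, hZ, rfl⟩
        obtain ⟨W, hW, hWe⟩ : ∃ W ∈ D, (t + s) • W = t • Y + s • Z := by
          rcases (add_nonneg ht hs).eq_or_lt with h | h
          · have h1 : t = 0 := by linarith
            have h2 : s = 0 := by linarith
            exact ⟨Y, hY, by simp [h1, h2]⟩
          · refine ⟨(t / (t + s)) • Y + (s / (t + s)) • Z,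
              hconv hY hZ (by positivity) (by positivity) (by field_simp), ?_⟩
            rw [smul_add, smul_smul, smul_smul, mul_div_cancel₀ _ h.ne', mul_div_cancel₀ _ h.ne']
        have h := hle (x + y) (t + s) (add_nonneg ht hs) W hW
        have h2 := hadd (x + t • Y) (y + s • Z)
        have h3 : x + y + (t + s) • W = x + t • Y + (y + s • Z) := by rw [hWe]; abel
        rw [h3] at h
        linarith
      have h1 : sInf (S (x + y)) - sInf (S y) ≤ sInf (S x) := by
        apply le_csInf (hne x)
        intro a ha
        have : sInf (S (x + y)) - a ≤ sInf (S y) := by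
          apply le_csInf (hne y)
          intro b hb
          linarith [key a ha b hb]
        linarith
      show sInf (S (x + y)) ≤ sInf (S x) + sInf (S y)
      linarith)
    (by
      rintro ⟨x, hx⟩
      have hx0 : x = 0 := (Submodule.mem_bot ℝ).1 hx
      subst hx0
      have h0 : (⊥ : E →ₗ.[ℝ] ℝ) ⟨0, hx⟩ = 0 := LinearPMap.map_zero _
      rw [h0]
      apply le_csInf (hne _)
      rintro r ⟨t, ht, Y, hY, rfl⟩
      have h3 := mul_le_mul_of_nonneg_left (hm Y hY) ht
      simp only [zero_add, hhom t ht]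
      linarith)
  have hρ0 : ρ 0 = 0 := by simpa using hhom 0 le_rfl 0
  refine ⟨g, fun x => ?_, fun Y hY => ?_⟩
  · obtain ⟨Y, hY⟩ := hD
    simpa using (hg x).trans (hle x 0 le_rfl Y hY)
  · have h := (hg (-Y)).trans (hle (-Y) 1 zero_le_one Y hY)
    simp [hρ0] at h
    exact h

/-- The submodule of bounded measurable functions. -/
def auxX (Ω : Type*) [MeasurableSpace Ω] : Submodule ℝ (Ω → ℝ) where
  carrier := {X | MemX X}
  zero_mem' := ⟨measurable_const, 0, by simp⟩
  add_mem' := by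
    rintro X Y ⟨hX, M, hM⟩ ⟨hY, K, hK⟩
    exact ⟨hX.add hY, M + K, fun ω => (abs_add_le _ _).trans (add_le_add (hM ω) (hK ω))⟩
  smul_mem' := by
    rintro c X ⟨hX, M, hM⟩
    refine ⟨hX.const_smul c, |c| * M, fun ω => ?_⟩
    simp only [Pi.smul_apply, smul_eq_mul, abs_mul]
    exact mul_le_mul_of_nonneg_left (hM ω) (abs_nonneg c)

theorem aux_main {Ω : Type*} [MeasurableSpace Ω]
    (Emu : (Ω → ℝ) → ℝ) (hEmu : IsSublinearOp Emu)
    (D : Set (Ω → ℝ)) (hD : D.Nonempty) (hconv : Convex ℝ D)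
    (hDX : ∀ X ∈ D, MemX X) (m : ℝ) (hm : ∀ X ∈ D, m ≤ Emu X) :
    ∃ P : (Ω → ℝ) → ℝ, IsLinearOp P ∧ Dominated P Emu ∧ ∀ X ∈ D, m ≤ P X := by
  obtain ⟨-, -, hadd, hhom⟩ := hEmu
  obtain ⟨g, hg, hgm⟩ := aux_sandwich (E := auxX Ω) (fun x => Emu x)
    (fun x y => hadd x y x.2 y.2) (fun c hc x => hhom c hc x x.2)
    ((auxX Ω).subtype ⁻¹' D) (by
      obtain ⟨X, hX⟩ := hD
      exact ⟨⟨X, hDX X hX⟩, hX⟩)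
    (hconv.linear_preimage _) m (fun Y hY => hm _ hY)
  obtain ⟨G, hG⟩ := g.exists_extend
  have hGe : ∀ X (h : MemX X), G X = g ⟨X, h⟩ := fun X h => by rw [← hG]; rfl
  refine ⟨G, ⟨fun X Y _ _ => map_add G X Y, fun c X _ => by simp⟩, fun X hX => ?_,
    fun X hX => ?_⟩
  · rw [hGe X hX]; exact hg ⟨X, hX⟩
  · rw [hGe X (hDX X hX)]; exact hgm ⟨X, hDX X hX⟩ hX

/-- Remark 4.3: for a nonempty convex subset `D` of `𝒳`, there is a linear functional
`P_α` dominated by `E_μ` with `inf_{X ∈ D} P_α(X) = inf_{X ∈ D} E_μ[X]`. -/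
theorem exists_dominated_linear_inf_eq {Ω : Type*} [MeasurableSpace Ω]
    (Emu : (Ω → ℝ) → ℝ) (hEmu : IsSublinearOp Emu)
    (D : Set (Ω → ℝ)) (hD : D.Nonempty) (hconv : Convex ℝ D)
    (hDX : ∀ X ∈ D, MemX X) :
    ∃ P : (Ω → ℝ) → ℝ, IsLinearOp P ∧ Dominated P Emu ∧
      sInf (P '' D) = sInf (Emu '' D) := by
  by_cases hb : BddBelow (Emu '' D)
  · obtain ⟨P, hP, hdom, hPm⟩ := aux_main Emu hEmu D hD hconv hDX (sInf (Emu '' D))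
      (fun X hX => csInf_le hb ⟨X, hX, rfl⟩)
    refine ⟨P, hP, hdom, le_antisymm ?_ ?_⟩
    · apply le_csInf (hD.image _)
      rintro _ ⟨X, hX, rfl⟩
      refine (csInf_le (s := P '' D) ⟨sInf (Emu '' D), ?_⟩ ⟨X, hX, rfl⟩).trans (hdom X (hDX X hX))
      rintro _ ⟨Y, hY, rfl⟩
      exact hPm Y hY
    · apply le_csInf (hD.image _)
      rintro _ ⟨X, hX, rfl⟩
      exact hPm X hX
  · obtain ⟨P, hP, hdom, -⟩ := aux_main Emu hEmu {0} ⟨0, rfl⟩ (convex_singleton 0)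
      (by rintro X rfl; exact (auxX Ω).zero_mem) 0
      (by rintro X rfl; exact (hEmu.2.1 0).ge)
    refine ⟨P, hP, hdom, ?_⟩
    rw [Real.sInf_of_not_bddBelow hb, Real.sInf_of_not_bddBelow]
    rintro ⟨b, hb'⟩
    apply hb
    refine ⟨b, ?_⟩
    rintro _ ⟨X, hX, rfl⟩
    exact (hb' ⟨X, hX, rfl⟩).trans (hdom X (hDX X hX))
end

section
/- Assume hypotheses (H1) and (H2). If X_α is an optimal solution of Problem 2.1, then (1−λ)·Q_α^p(X_α) = 1−λ. -/
open MeasureTheory Filter Topology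
open scoped ENNReal

/-- A positive normalized linear functional `Qp` is *pure additive* if there is a
sequence of measurable sets `A n ↓ ∅` with `Qp(1_{A n}) → 1`. -/
def PureAdditive {Ω : Type*} [MeasurableSpace Ω] (Qp : (Ω → ℝ) → ℝ) : Prop :=
  ∃ A : ℕ → Set Ω, (∀ n, MeasurableSet (A n)) ∧ Antitone A ∧ (⋂ n, A n) = ∅ ∧
    Tendsto (fun n => Qp ((A n).indicator fun _ => (1 : ℝ))) atTop (𝓝 1)

/-- Hypothesis (H1): for every sequence of measurable sets `A n ↓ ∅` such that
`lim E_υ[1_{A n}]` exists and is nonzero, one has `lim E_μ[1_{A n}] = 0`. -/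
def HypH1 {Ω : Type*} [MeasurableSpace Ω] (Emu Eups : (Ω → ℝ) → ℝ) : Prop :=
  ∀ A : ℕ → Set Ω, (∀ n, MeasurableSet (A n)) → Antitone A → (⋂ n, A n) = ∅ →
    ∀ l : ℝ, Tendsto (fun n => Eups ((A n).indicator fun _ => (1 : ℝ))) atTop (𝓝 l) →
      l ≠ 0 →
      Tendsto (fun n => Emu ((A n).indicator fun _ => (1 : ℝ))) atTop (𝓝 0)

/-- Hypothesis (H2): for every `X ∈ 𝒳_α` with `E_μ[X] > 0` and every positive
integer `K`, `E_μ[X] > E_μ[(X - 1/K)⁺]`. -/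
def HypH2 {Ω : Type*} [MeasurableSpace Ω] (Emu : (Ω → ℝ) → ℝ) (α : ℝ) : Prop :=
  ∀ X ∈ testSet Emu α, 0 < Emu X → ∀ K : ℕ, 0 < K →
    Emu (fun ω => max (X ω - 1 / (K : ℝ)) 0) < Emu X

/-- Hypothesis (H3): for every sequence of measurable sets `A n ↓ ∅`,
`lim E_μ[1_{A n}] < 1` and `lim E_υ[1_{A n}] < 1`. -/
def HypH3 {Ω : Type*} [MeasurableSpace Ω] (Emu Eups : (Ω → ℝ) → ℝ) : Prop :=
  ∀ A : ℕ → Set Ω, (∀ n, MeasurableSet (A n)) → Antitone A → (⋂ n, A n) = ∅ →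
    (∀ l : ℝ, Tendsto (fun n => Emu ((A n).indicator fun _ => (1 : ℝ))) atTop (𝓝 l) →
      l < 1) ∧
    (∀ l : ℝ, Tendsto (fun n => Eups ((A n).indicator fun _ => (1 : ℝ))) atTop (𝓝 l) →
      l < 1)

/-- Proposition 4.3: under (H1) and (H2), if `X_α` is an optimal solution of
Problem 2.1, then `(1-λ)·Q_α^p(X_α) = 1-λ`. -/
theorem pure_part_attains_one {Ω : Type*} [MeasurableSpace Ω]
    (Emu Eups : (Ω → ℝ) → ℝ)
    (hEmu : IsSublinearOp Emu) (hEups : IsSublinearOp Eups)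
    (α : ℝ) (hα0 : 0 < α) (hα1 : α < 1)
    (lam : ℝ) (hlam0 : 0 ≤ lam) (hlam1 : lam ≤ 1)
    (Qc : Measure Ω) (hQc : IsProbabilityMeasure Qc)
    (Qp : (Ω → ℝ) → ℝ) (hQplin : IsLinearOp Qp)
    (hQppos : ∀ X : Ω → ℝ, MemX X → (∀ ω, 0 ≤ X ω) → 0 ≤ Qp X)
    (hQpone : Qp (fun _ => 1) = 1) (hQppure : PureAdditive Qp)
    (Qa : (Ω → ℝ) → ℝ) (hQalin : IsLinearOp Qa) (hQadom : Dominated Qa Eups)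
    (hQasup : sSup (Qa '' testSet Emu α) = sSup (conjOp Eups '' testSet Emu α))
    (hQadec : ∀ X : Ω → ℝ, MemX X → Qa X = lam * ∫ ω, X ω ∂Qc + (1 - lam) * Qp X)
    (hH1 : HypH1 Emu Eups) (hH2 : HypH2 Emu α)
    (Xa : Ω → ℝ) (hXa : Xa ∈ testSet Emu α)
    (hXopt : conjOp Eups Xa = sSup (conjOp Eups '' testSet Emu α)) :
    (1 - lam) * Qp Xa = 1 - lam := by
  rcases eq_or_lt_of_le hlam1 with h1 | h1
  · subst h1; simp
  obtain ⟨muMono, muConst, muAdd, -⟩ := hEmu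
  obtain ⟨upMono, upConst, upAdd, -⟩ := hEups
  have hXm : MemX Xa := hXa.1
  have hX01 := hXa.2.1
  have hXal := hXa.2.2
  have memInd : ∀ B : Set Ω, MeasurableSet B → MemX (B.indicator fun _ => (1 : ℝ)) := by
    intro B hB
    refine ⟨measurable_const.indicator hB, 1, fun ω => ?_⟩
    by_cases h : ω ∈ B <;> simp [h]
  have memConst : ∀ c : ℝ, MemX (fun _ : Ω => c) :=
    fun c => ⟨measurable_const, |c|, fun _ => le_rfl⟩
  have mem01 : ∀ X : Ω → ℝ, Measurable X → (∀ ω, 0 ≤ X ω ∧ X ω ≤ 1) → MemX X := by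
    intro X hX h
    exact ⟨hX, 1, fun ω => abs_le.2 ⟨by linarith [(h ω).1], (h ω).2⟩⟩
  -- negation and monotonicity for `Qp`
  have memNeg : ∀ X : Ω → ℝ, MemX X → MemX ((-1 : ℝ) • X) := by
    rintro X ⟨hX, M, hM⟩
    refine ⟨hX.const_smul (-1 : ℝ), M, fun ω => ?_⟩
    simpa using hM ω
  have memAdd : ∀ X Y : Ω → ℝ, MemX X → MemX Y → MemX (X + Y) := by
    rintro X Y ⟨hX, M, hM⟩ ⟨hY, N, hN⟩
    refine ⟨hX.add hY, M + N, fun ω => ?_⟩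
    exact (abs_add_le (X ω) (Y ω)).trans (add_le_add (hM ω) (hN ω))
  have QpMono : ∀ X Y : Ω → ℝ, MemX X → MemX Y → (∀ ω, Y ω ≤ X ω) → Qp Y ≤ Qp X := by
    intro X Y hX hY h
    have h2 := hQppos (X + (-1 : ℝ) • Y) (memAdd _ _ hX (memNeg Y hY))
      (fun ω => by simpa using h ω)
    rw [hQplin.1 _ _ hX (memNeg Y hY), hQplin.2 _ _ hY] at h2
    linarith
  have integ : ∀ X : Ω → ℝ, MemX X → Integrable X Qc := by
    rintro X ⟨hX, M, hM⟩
    exact Integrable.of_bound hX.aestronglyMeasurable M (Eventually.of_forall hM)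
  obtain ⟨A, hAm, hAanti, hAe, hAt⟩ := hQppure
  have indMono : ∀ m n, m ≤ n → ∀ ω, (A n).indicator (fun _ => (1 : ℝ)) ω
      ≤ (A m).indicator (fun _ => (1 : ℝ)) ω := by
    intro m n hmn ω
    exact Set.indicator_le_indicator_of_subset (hAanti hmn) (fun _ => zero_le_one) ω
  have ind0 : ∀ n ω, 0 ≤ (A n).indicator (fun _ => (1 : ℝ)) ω :=
    fun n ω => Set.indicator_nonneg (fun _ _ => zero_le_one) ω
  have ind1 : ∀ n ω, (A n).indicator (fun _ => (1 : ℝ)) ω ≤ 1 := by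
    intro n ω
    by_cases h : ω ∈ A n <;> simp [h]
  have upAnti : Antitone fun n => Eups ((A n).indicator fun _ => (1 : ℝ)) :=
    fun m n hmn => upMono _ _ (memInd _ (hAm m)) (memInd _ (hAm n)) (indMono m n hmn)
  have upBdd : BddBelow (Set.range fun n => Eups ((A n).indicator fun _ => (1 : ℝ))) := by
    refine ⟨0, ?_⟩
    rintro _ ⟨n, rfl⟩
    have := upMono _ _ (memInd _ (hAm n)) (memConst 0) (ind0 n)
    rwa [upConst] at this
  have upT := tendsto_atTop_ciInf upAnti upBdd
  have hlim : 1 - lam ≤ ⨅ n, Eups ((A n).indicator fun _ => (1 : ℝ)) := by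
    have ht := hAt.const_mul (1 - lam)
    rw [mul_one] at ht
    refine le_of_tendsto_of_tendsto' ht upT fun n => ?_
    have ha := hQadom _ (memInd _ (hAm n))
    rw [hQadec _ (memInd _ (hAm n))] at ha
    have hi : 0 ≤ ∫ ω, (A n).indicator (fun _ => (1 : ℝ)) ω ∂Qc :=
      integral_nonneg (ind0 n)
    have := mul_nonneg hlam0 hi
    linarith
  have muT := hH1 A hAm hAanti hAe _ upT (by linarith)
  -- optimality of `Xa` for `Qa`
  have hopt : ∀ Y ∈ testSet Emu α, Qa Y ≤ Qa Xa := by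
    intro Y hY
    have hb : BddAbove (Qa '' testSet Emu α) := by
      refine ⟨1, ?_⟩
      rintro _ ⟨Z, hZ, rfl⟩
      have h2 := upMono _ _ (memConst 1) hZ.1 (fun ω => (hZ.2.1 ω).2)
      rw [upConst] at h2
      exact (hQadom Z hZ.1).trans h2
    have h2 : Qa Y ≤ conjOp Eups Xa := by
      rw [hXopt, ← hQasup]
      exact le_csSup hb ⟨Y, hY, rfl⟩
    have e : -Xa = (-1 : ℝ) • Xa := by simp
    have h3 := hQadom _ (memNeg Xa hXm)
    rw [hQalin.2 _ _ hXm, ← e] at h3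
    unfold conjOp at h2
    linarith
  have hmu0 : 0 ≤ Emu Xa := by
    have := muMono _ _ hXm (memConst 0) (fun ω => (hX01 ω).1)
    rwa [muConst] at this
  have key : ∀ K : ℕ, 0 < K → 1 - lam ≤ (1 - lam) * Qp Xa + lam * (1 / (K : ℝ)) := by
    intro K hK
    have hKp : (0 : ℝ) < 1 / (K : ℝ) := by positivity
    set W : Ω → ℝ := fun ω => max (Xa ω - 1 / (K : ℝ)) 0 with hW
    have W01 : ∀ ω, 0 ≤ W ω ∧ W ω ≤ 1 := fun ω =>
      ⟨le_max_right _ _, max_le (by linarith [(hX01 ω).2]) zero_le_one⟩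
    have Wm : Measurable W := (hXm.1.sub_const _).max measurable_const
    have WM := mem01 W Wm W01
    have hWα : Emu W < α := by
      rcases eq_or_lt_of_le hmu0 with h | h
      · have := muMono _ _ hXm WM
          (fun ω => max_le (by linarith) (hX01 ω).1)
        linarith
      · exact (hH2 Xa hXa h K hK).trans_le hXal
    have hev : ∀ᶠ n in atTop, Emu ((A n).indicator fun _ => (1 : ℝ)) < α - Emu W :=
      muT.eventually_lt_const (by linarith)
    have ht := hAt.const_mul (1 - lam)
    rw [mul_one] at ht
    refine le_of_tendsto ht ?_
    filter_upwards [hev] with n hn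
    set I : Ω → ℝ := (A n).indicator fun _ => (1 : ℝ) with hI
    have IM : MemX I := memInd _ (hAm n)
    have Y01 : ∀ ω, 0 ≤ max (W ω) (I ω) ∧ max (W ω) (I ω) ≤ 1 := fun ω =>
      ⟨le_max_of_le_left (W01 ω).1, max_le (W01 ω).2 (ind1 n ω)⟩
    have YM : MemX (fun ω => max (W ω) (I ω)) := mem01 _ (Wm.max IM.1) Y01
    have hYα : Emu (fun ω => max (W ω) (I ω)) ≤ α := by
      have h2 := muMono _ _ (memAdd _ _ WM IM) YM (fun ω =>
        max_le (by simpa using ind0 n ω) (by simpa using (W01 ω).1))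
      have h3 := muAdd _ _ WM IM
      linarith
    have h2 := hopt _ ⟨YM, Y01, hYα⟩
    rw [hQadec _ YM, hQadec _ hXm] at h2
    have h3 := QpMono _ _ YM IM (fun ω => le_max_right _ _)
    have h4 : (∫ ω, Xa ω ∂Qc) - 1 / (K : ℝ) ≤ ∫ ω, max (W ω) (I ω) ∂Qc := by
      have h5 : ∫ ω, (Xa ω - 1 / (K : ℝ)) ∂Qc = (∫ ω, Xa ω ∂Qc) - 1 / (K : ℝ) := by
        rw [integral_sub (integ _ hXm) (integrable_const _)]
        simp
      rw [← h5]
      exact integral_mono ((integ _ hXm).sub (integrable_const _)) (integ _ YM)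
        (fun ω => (le_max_left (Xa ω - 1 / (K : ℝ)) 0).trans (le_max_left (W ω) (I ω)))
    have h6 := mul_le_mul_of_nonneg_left h4 hlam0
    have h7 := mul_le_mul_of_nonneg_left h3 (by linarith : (0 : ℝ) ≤ 1 - lam)
    rw [mul_sub] at h6
    linarith
  apply le_antisymm
  · have h2 := QpMono _ _ (memConst 1) hXm (fun ω => (hX01 ω).2)
    rw [hQpone] at h2
    have := mul_le_mul_of_nonneg_left h2 (by linarith : (0 : ℝ) ≤ 1 - lam)
    linarith
  · have ht : Tendsto (fun K : ℕ => (1 - lam) * Qp Xa + lam * (1 / (K : ℝ))) atTop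
        (𝓝 ((1 - lam) * Qp Xa + lam * 0)) :=
      (tendsto_one_div_atTop_nhds_zero_nat.const_mul lam).const_add _
    rw [mul_zero, add_zero] at ht
    exact ge_of_tendsto ht ((eventually_gt_atTop 0).mono key)
end

section
/- Assume hypotheses (H1) and (H2). If X_α is an optimal solution of Problem 2.1, then Q_α(X_α) = sup_{X ∈ 𝒳_α} Q_α(X) = sup_{X ∈ 𝒳_α} E_{λQ_α^c}[X] + sup_{X ∈ 𝒳_α} (1−λ)·Q_α^p(X). -/
open MeasureTheory Filter Topology
open scoped ENNReal

/-- A function with values in `[0,1]` that is measurable lies in `𝒳`. -/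
theorem memX_of_unit {Ω : Type*} [MeasurableSpace Ω] {X : Ω → ℝ} (hm : Measurable X)
    (h : ∀ ω, 0 ≤ X ω ∧ X ω ≤ 1) : MemX X :=
  ⟨hm, 1, fun ω => abs_le.2 ⟨by linarith [(h ω).1], (h ω).2⟩⟩

/-- Members of `𝒳` are integrable for a probability measure. -/
theorem memX_integrable {Ω : Type*} [MeasurableSpace Ω] {X : Ω → ℝ} (hX : MemX X)
    (Q : Measure Ω) [IsProbabilityMeasure Q] : Integrable X Q := by
  obtain ⟨hm, M, hM⟩ := hX
  exact Integrable.of_bound hm.aestronglyMeasurable M (Eventually.of_forall hM)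

/-- A positive linear functional is monotone. -/
theorem posLin_mono {Ω : Type*} [MeasurableSpace Ω] {Qp : (Ω → ℝ) → ℝ} (hlin : IsLinearOp Qp)
    (hpos : ∀ X : Ω → ℝ, MemX X → (∀ ω, 0 ≤ X ω) → 0 ≤ Qp X)
    {X Y : Ω → ℝ} (hX : MemX X) (hY : MemX Y) (h : ∀ ω, X ω ≤ Y ω) : Qp X ≤ Qp Y := by
  have hD : MemX (Y - X) := by
    obtain ⟨hm, M, hM⟩ := hX
    obtain ⟨hm2, M2, hM2⟩ := hY
    refine ⟨hm2.sub hm, M2 + M, fun ω => ?_⟩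
    exact (abs_sub _ _).trans (add_le_add (hM2 ω) (hM ω))
  have h1 := hlin.1 X (Y - X) hX hD
  rw [add_sub_cancel] at h1
  have h2 := hpos _ hD (fun ω => by simpa using h ω)
  linarith

/-- Lemma 4.4: under (H1) and (H2), if `X_α` is an optimal solution of Problem 2.1,
then `Q_α(X_α) = sup_{𝒳_α} Q_α = sup_{𝒳_α} E_{λQ_α^c} + sup_{𝒳_α} (1-λ)Q_α^p`. -/
theorem Qalpha_sup_splits {Ω : Type*} [MeasurableSpace Ω]
    (Emu Eups : (Ω → ℝ) → ℝ)
    (hEmu : IsSublinearOp Emu) (hEups : IsSublinearOp Eups)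
    (α : ℝ) (hα0 : 0 < α) (hα1 : α < 1)
    (lam : ℝ) (hlam0 : 0 ≤ lam) (hlam1 : lam ≤ 1)
    (Qc : Measure Ω) (hQc : IsProbabilityMeasure Qc)
    (Qp : (Ω → ℝ) → ℝ) (hQplin : IsLinearOp Qp)
    (hQppos : ∀ X : Ω → ℝ, MemX X → (∀ ω, 0 ≤ X ω) → 0 ≤ Qp X)
    (hQpone : Qp (fun _ => 1) = 1) (hQppure : PureAdditive Qp)
    (Qa : (Ω → ℝ) → ℝ) (hQalin : IsLinearOp Qa) (hQadom : Dominated Qa Eups)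
    (hQasup : sSup (Qa '' testSet Emu α) = sSup (conjOp Eups '' testSet Emu α))
    (hQadec : ∀ X : Ω → ℝ, MemX X → Qa X = lam * ∫ ω, X ω ∂Qc + (1 - lam) * Qp X)
    (hH1 : HypH1 Emu Eups) (hH2 : HypH2 Emu α)
    (Xa : Ω → ℝ) (hXa : Xa ∈ testSet Emu α)
    (hXopt : conjOp Eups Xa = sSup (conjOp Eups '' testSet Emu α)) :
    Qa Xa = sSup (Qa '' testSet Emu α) ∧
    sSup (Qa '' testSet Emu α) =
      sSup ((fun X : Ω → ℝ => lam * ∫ ω, X ω ∂Qc) '' testSet Emu α) +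
      sSup ((fun X : Ω → ℝ => (1 - lam) * Qp X) '' testSet Emu α) := by
  have hI : ∀ X ∈ testSet Emu α, ∫ ω, X ω ∂Qc ≤ 1 := by
    intro X hX
    have := integral_mono (memX_integrable hX.1 Qc) (integrable_const (1 : ℝ))
      (fun ω => (hX.2.1 ω).2)
    simpa using this
  have hone : MemX (fun _ : Ω => (1 : ℝ)) := memX_of_unit measurable_const (by simp)
  have hP : ∀ X ∈ testSet Emu α, Qp X ≤ 1 := by
    intro X hX
    rw [← hQpone]
    exact posLin_mono hQplin hQppos hX.1 hone (fun ω => (hX.2.1 ω).2)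
  have hl : 0 ≤ 1 - lam := by linarith
  have hbA : BddAbove ((fun X : Ω → ℝ => lam * ∫ ω, X ω ∂Qc) '' testSet Emu α) := by
    refine ⟨lam, ?_⟩
    rintro _ ⟨X, hX, rfl⟩
    exact mul_le_of_le_one_right hlam0 (hI X hX)
  have hbB : BddAbove ((fun X : Ω → ℝ => (1 - lam) * Qp X) '' testSet Emu α) := by
    refine ⟨1 - lam, ?_⟩
    rintro _ ⟨X, hX, rfl⟩
    exact mul_le_of_le_one_right hl (hP X hX)
  have hbQ : BddAbove (Qa '' testSet Emu α) := by
    refine ⟨1, ?_⟩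
    rintro _ ⟨X, hX, rfl⟩
    rw [hQadec X hX.1]
    have h1 := mul_le_of_le_one_right hlam0 (hI X hX)
    have h2 := mul_le_of_le_one_right hl (hP X hX)
    linarith
  have hne : (testSet Emu α).Nonempty := ⟨Xa, hXa⟩
  have hle : ∀ X ∈ testSet Emu α, Qa X ≤ sSup (Qa '' testSet Emu α) :=
    fun X hX => le_csSup hbQ ⟨X, hX, rfl⟩
  refine ⟨le_antisymm (hle Xa hXa) ?_, le_antisymm ?_ ?_⟩
  · rw [hQasup, ← hXopt]
    have hneg : MemX (-Xa) := by
      obtain ⟨hm, M, hM⟩ := hXa.1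
      exact ⟨hm.neg, M, fun ω => by simpa using hM ω⟩
    have h1 := hQadom (-Xa) hneg
    have h2 := hQalin.2 (-1) Xa hXa.1
    rw [neg_one_smul] at h2
    unfold conjOp
    linarith
  · refine csSup_le (hne.image _) ?_
    rintro _ ⟨X, hX, rfl⟩
    rw [hQadec X hX.1]
    exact add_le_add (le_csSup hbA ⟨X, hX, rfl⟩) (le_csSup hbB ⟨X, hX, rfl⟩)
  have hB : sSup ((fun X : Ω → ℝ => (1 - lam) * Qp X) '' testSet Emu α) ≤ 1 - lam := by
    refine csSup_le (hne.image _) ?_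
    rintro _ ⟨X, hX, rfl⟩
    exact mul_le_of_le_one_right hl (hP X hX)
  suffices hA : sSup ((fun X : Ω → ℝ => lam * ∫ ω, X ω ∂Qc) '' testSet Emu α) ≤
      sSup (Qa '' testSet Emu α) - (1 - lam) by linarith
  refine csSup_le (hne.image _) ?_
  rintro _ ⟨X, hX, rfl⟩
  show lam * ∫ ω, X ω ∂Qc ≤ _
  rcases hl.eq_or_lt with h0 | hlpos
  · have h1 := hle X hX
    rw [hQadec X hX.1, ← h0] at h1
    linarith
  obtain ⟨A, hAm, hAanti, hAempty, hAlim⟩ := hQppure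
  set I : ℕ → Ω → ℝ := fun n => (A n).indicator fun _ => (1 : ℝ) with hIdef
  have hIu : ∀ n ω, 0 ≤ I n ω ∧ I n ω ≤ 1 := by
    intro n ω
    by_cases h : ω ∈ A n <;> simp [hIdef, h]
  have hIm : ∀ n, Measurable (I n) := fun n => measurable_const.indicator (hAm n)
  have hIX : ∀ n, MemX (I n) := fun n => memX_of_unit (hIm n) (hIu n)
  have hUanti : Antitone (fun n => Eups (I n)) := by
    intro m n hmn
    refine hEups.1 _ _ (hIX m) (hIX n) (fun ω => ?_)
    exact Set.indicator_le_indicator_of_subset (hAanti hmn) (fun _ => zero_le_one) ω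
  have hUge : ∀ n, (1 - lam) * Qp (I n) ≤ Eups (I n) := by
    intro n
    have h1 := hQadom _ (hIX n)
    rw [hQadec _ (hIX n)] at h1
    have h2 : 0 ≤ ∫ ω, I n ω ∂Qc := integral_nonneg (fun ω => (hIu n ω).1)
    have h3 := mul_nonneg hlam0 h2
    linarith
  have hUbdd : BddBelow (Set.range fun n => Eups (I n)) := by
    refine ⟨0, ?_⟩
    rintro _ ⟨n, rfl⟩
    exact (mul_nonneg hl (hQppos _ (hIX n) (fun ω => (hIu n ω).1))).trans (hUge n)
  have hUlim := tendsto_atTop_ciInf hUanti hUbdd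
  have hlpos2 : 1 - lam ≤ ⨅ n, Eups (I n) := by
    have h1 := le_of_tendsto_of_tendsto' (hAlim.const_mul (1 - lam)) hUlim hUge
    simpa using h1
  have hMlim : Tendsto (fun n => Emu (I n)) atTop (𝓝 0) :=
    hH1 A hAm hAanti hAempty _ hUlim (by linarith)
  refine le_of_forall_pos_le_add fun δ hδ => ?_
  obtain ⟨ε, hε0, hε1, hεδ⟩ : ∃ ε : ℝ, 0 < ε ∧ ε ≤ 1 ∧ 2 * ε ≤ δ :=
    ⟨min 1 (δ / 2), by positivity, min_le_left _ _, by linarith [min_le_right 1 (δ / 2)]⟩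
  obtain ⟨n, hn1, hn2⟩ := ((hMlim.eventually_lt_const (show 0 < ε * α by positivity)).and
    (hAlim.eventually_const_lt (show 1 - ε < 1 by linarith))).exists
  change Emu (I n) < _ at hn1
  change _ < Qp (I n) at hn2
  have hXu := hX.2.1
  have hε2 : 0 ≤ 1 - ε := by linarith
  have hs0 : ∀ ω, 0 ≤ ((1 - ε) • X) ω ∧ ((1 - ε) • X) ω ≤ 1 := fun ω =>
    ⟨mul_nonneg hε2 (hXu ω).1, mul_le_one₀ (by linarith) (hXu ω).1 (hXu ω).2⟩
  have hsX : MemX ((1 - ε) • X) := memX_of_unit (hX.1.1.const_smul _) hs0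
  set Z : Ω → ℝ := fun ω => max (((1 - ε) • X) ω) (I n ω) with hZ
  have hZu : ∀ ω, 0 ≤ Z ω ∧ Z ω ≤ 1 := fun ω =>
    ⟨le_max_of_le_left (hs0 ω).1, max_le (hs0 ω).2 (hIu n ω).2⟩
  have hZX : MemX Z := memX_of_unit (hsX.1.max (hIm n)) hZu
  have hsum : MemX ((1 - ε) • X + I n) := by
    refine ⟨hsX.1.add (hIm n), 2, fun ω => ?_⟩
    have h1 := hs0 ω
    have h2 := hIu n ω
    rw [Pi.add_apply, abs_le]
    constructor <;> linarith [h1.1, h1.2, h2.1, h2.2]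
  have hZt : Z ∈ testSet Emu α := by
    refine ⟨hZX, hZu, ?_⟩
    have h1 : Emu Z ≤ Emu ((1 - ε) • X + I n) :=
      hEmu.1 _ _ hsum hZX (fun ω => by
        rw [Pi.add_apply]
        exact max_le (by linarith [(hIu n ω).1]) (by linarith [(hs0 ω).1]))
    have h2 := hEmu.2.2.1 _ _ hsX (hIX n)
    have h3 := hEmu.2.2.2 (1 - ε) hε2 X hX.1
    have h4 := mul_le_mul_of_nonneg_left hX.2.2 hε2
    linarith
  have hfin := hle Z hZt
  rw [hQadec Z hZX] at hfin
  have hp1 : Qp (I n) ≤ Qp Z :=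
    posLin_mono hQplin hQppos (hIX n) hZX (fun ω => le_max_right _ _)
  have hi1 : (1 - ε) * ∫ ω, X ω ∂Qc ≤ ∫ ω, Z ω ∂Qc := by
    rw [← integral_const_mul]
    exact integral_mono (memX_integrable hsX Qc) (memX_integrable hZX Qc)
      (fun ω => le_max_left _ _)
  have hi2 : ∫ ω, X ω ∂Qc - ε ≤ ∫ ω, Z ω ∂Qc := by
    nlinarith [hI X hX]
  have h5 := mul_le_mul_of_nonneg_left hi2 hlam0
  have h6 := mul_le_mul_of_nonneg_left (hn2.le.trans hp1) hl
  nlinarith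
end

section
/- Assume hypotheses (H1) and (H2). If X_α is an optimal solution of Problem 2.1, then X_α is also an optimal solution of Problem (4.3), i.e. E_{λQ_α^c}[X_α] = sup_{X ∈ 𝒳_α} E_{λQ_α^c}[X] = γ_α^c. -/
open MeasureTheory Filter Topology
open scoped ENNReal

/-- Theorem 4.1: under (H1) and (H2), any optimal solution of Problem 2.1 is also an
optimal solution of problem (4.3), i.e. it maximizes `E_{λQ_α^c}` over `𝒳_α`. -/
theorem optimal_solves_countable_part {Ω : Type*} [MeasurableSpace Ω]
    (Emu Eups : (Ω → ℝ) → ℝ)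
    (hEmu : IsSublinearOp Emu) (hEups : IsSublinearOp Eups)
    (α : ℝ) (hα0 : 0 < α) (hα1 : α < 1)
    (lam : ℝ) (hlam0 : 0 ≤ lam) (hlam1 : lam ≤ 1)
    (Qc : Measure Ω) (hQc : IsProbabilityMeasure Qc)
    (Qp : (Ω → ℝ) → ℝ) (hQplin : IsLinearOp Qp)
    (hQppos : ∀ X : Ω → ℝ, MemX X → (∀ ω, 0 ≤ X ω) → 0 ≤ Qp X)
    (hQpone : Qp (fun _ => 1) = 1) (hQppure : PureAdditive Qp)
    (Qa : (Ω → ℝ) → ℝ) (hQalin : IsLinearOp Qa) (hQadom : Dominated Qa Eups)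
    (hQasup : sSup (Qa '' testSet Emu α) = sSup (conjOp Eups '' testSet Emu α))
    (hQadec : ∀ X : Ω → ℝ, MemX X → Qa X = lam * ∫ ω, X ω ∂Qc + (1 - lam) * Qp X)
    (hH1 : HypH1 Emu Eups) (hH2 : HypH2 Emu α)
    (Xa : Ω → ℝ) (hXa : Xa ∈ testSet Emu α)
    (hXopt : conjOp Eups Xa = sSup (conjOp Eups '' testSet Emu α)) :
    lam * ∫ ω, Xa ω ∂Qc =
      sSup ((fun X : Ω → ℝ => lam * ∫ ω, X ω ∂Qc) '' testSet Emu α) := by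
  obtain ⟨hm, hc, hsub, hhom⟩ := hEmu
  obtain ⟨um, uc, usub, uhom⟩ := hEups
  have memOf : ∀ X : Ω → ℝ, Measurable X → (∀ ω, 0 ≤ X ω ∧ X ω ≤ 1) → MemX X :=
    fun X h1 h2 => ⟨h1, 1, fun ω => by
      rw [abs_le]; constructor <;> linarith [(h2 ω).1, (h2 ω).2]⟩
  have integ : ∀ X : Ω → ℝ, MemX X → Integrable X Qc := by
    rintro X ⟨h1, M, h2⟩
    exact Integrable.of_bound h1.aestronglyMeasurable M (Eventually.of_forall h2)
  have one_mem : MemX (fun _ : Ω => (1:ℝ)) := memOf _ measurable_const (by simp)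
  have negmem : ∀ X : Ω → ℝ, MemX X → MemX (-X) := by
    rintro X ⟨h1, M, h2⟩
    exact ⟨h1.neg, M, fun ω => by simpa using h2 ω⟩
  have qpmono : ∀ X Y : Ω → ℝ, MemX X → MemX Y → (∀ ω, X ω ≤ Y ω) → Qp X ≤ Qp Y := by
    intro X Y hX hY hXY
    have hd : MemX (Y + -X) := by
      obtain ⟨h1, M, h2⟩ := hX
      obtain ⟨h1', M', h2'⟩ := hY
      refine ⟨h1'.add h1.neg, M' + M, fun ω => ?_⟩
      have := abs_add_le (Y ω) (-X ω)
      rw [abs_neg] at this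
      have e : (Y + -X) ω = Y ω + -X ω := rfl
      rw [e]; linarith [h2 ω, h2' ω]
    have h := hQplin.1 (Y + -X) X hd hX
    have e : Y + -X + X = Y := by simp
    rw [e] at h
    have := hQppos _ hd (fun ω => by simpa using hXY ω)
    linarith
  have qale : ∀ X ∈ testSet Emu α, Qa X ≤ 1 := by
    intro X hX
    have h1 := hQadom X hX.1
    have h2 := um (fun _ => 1) X one_mem hX.1 (fun ω => (hX.2.1 ω).2)
    rw [uc] at h2
    linarith
  have qaopt : ∀ X ∈ testSet Emu α, Qa X ≤ Qa Xa := by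
    intro X hX
    have h1 : Qa X ≤ sSup (Qa '' testSet Emu α) :=
      le_csSup ⟨1, by rintro _ ⟨Y, hY, rfl⟩; exact qale Y hY⟩ ⟨X, hX, rfl⟩
    have h2 := hQadom (-Xa) (negmem _ hXa.1)
    have h3 := hQalin.2 (-1) Xa hXa.1
    have e : (-1 : ℝ) • Xa = -Xa := by simp
    rw [e] at h3
    rw [hQasup, ← hXopt] at h1
    unfold conjOp at h1
    linarith
  have key : ∀ X ∈ testSet Emu α, lam * ∫ ω, X ω ∂Qc ≤ lam * ∫ ω, Xa ω ∂Qc := by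
    intro X hX
    rcases hlam1.eq_or_lt with h1 | hlt
    · have := qaopt X hX
      rw [hQadec _ hX.1, hQadec _ hXa.1, h1] at this
      rw [h1]; linarith
    obtain ⟨A, Am, Aanti, Aemp, Alim⟩ := hQppure
    have indm : ∀ n, MemX ((A n).indicator fun _ => (1:ℝ)) := fun n =>
      memOf _ (measurable_const.indicator (Am n)) (fun ω => by
        by_cases h : ω ∈ A n <;> simp [h])
    have ind0 : ∀ n ω, 0 ≤ (A n).indicator (fun _ => (1:ℝ)) ω := fun n ω => by
      by_cases h : ω ∈ A n <;> simp [h]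
    have ind1 : ∀ n ω, (A n).indicator (fun _ => (1:ℝ)) ω ≤ 1 := fun n ω => by
      by_cases h : ω ∈ A n <;> simp [h]
    have uanti : Antitone (fun n => Eups ((A n).indicator fun _ => (1 : ℝ))) := by
      intro m n hmn
      exact um _ _ (indm m) (indm n) (fun ω =>
        Set.indicator_le_indicator_of_subset (Aanti hmn) (fun _ => zero_le_one) ω)
    have ulow : ∀ n, (1 - lam) * Qp ((A n).indicator fun _ => (1 : ℝ))
        ≤ Eups ((A n).indicator fun _ => (1 : ℝ)) := by
      intro n
      have h := hQadom _ (indm n)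
      rw [hQadec _ (indm n)] at h
      have : 0 ≤ lam * ∫ ω, (A n).indicator (fun _ => (1 : ℝ)) ω ∂Qc :=
        mul_nonneg hlam0 (integral_nonneg (ind0 n))
      linarith
    have ubdd : BddBelow (Set.range (fun n => Eups ((A n).indicator fun _ => (1 : ℝ)))) := by
      refine ⟨0, ?_⟩
      rintro _ ⟨n, rfl⟩
      exact (mul_nonneg (by linarith) (hQppos _ (indm n) (ind0 n))).trans (ulow n)
    have ulim := tendsto_atTop_ciInf uanti ubdd
    have lpos := le_of_tendsto_of_tendsto' (Alim.const_mul (1 - lam)) ulim ulow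
    have mulim := hH1 A Am Aanti Aemp _ ulim (by intro h; rw [h] at lpos; linarith)
    have qpXa : Qp Xa ≤ 1 := by
      rw [← hQpone]; exact qpmono _ _ hXa.1 one_mem (fun ω => (hXa.2.1 ω).2)
    have step : ∀ ε : ℝ, 0 < ε → ε < 1 →
        lam * ((1 - ε) * ∫ ω, X ω ∂Qc) ≤ lam * ∫ ω, Xa ω ∂Qc := by
      intro ε he0 he1
      have ev : ∀ᶠ n in atTop, lam * ((1 - ε) * ∫ ω, X ω ∂Qc)
          + (1 - lam) * Qp ((A n).indicator fun _ => (1 : ℝ))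
          ≤ lam * ∫ ω, Xa ω ∂Qc + (1 - lam) := by
        filter_upwards [mulim.eventually_lt_const (mul_pos he0 hα0)] with n hn
        have hsm : MemX ((1 - ε) • X) := by
          refine memOf _ (hX.1.1.const_smul _) (fun ω => ?_)
          have := hX.2.1 ω
          simp only [Pi.smul_apply, smul_eq_mul]
          constructor <;> nlinarith
        set I : Ω → ℝ := (A n).indicator fun _ => (1 : ℝ) with hI
        let Y : Ω → ℝ := fun ω => max (((1 - ε) • X) ω) (I ω)
        have X0 : ∀ ω, 0 ≤ ((1 - ε) • X) ω ∧ ((1 - ε) • X) ω ≤ 1 := fun ω => by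
          have := hX.2.1 ω
          simp only [Pi.smul_apply, smul_eq_mul]
          constructor <;> nlinarith
        have Y01 : ∀ ω, 0 ≤ Y ω ∧ Y ω ≤ 1 := fun ω =>
          ⟨le_max_of_le_right (ind0 n ω), max_le (X0 ω).2 (ind1 n ω)⟩
        have Ym : MemX Y := memOf _ (hsm.1.max (indm n).1) Y01
        have Sm : MemX ((1 - ε) • X + I) := by
          refine ⟨hsm.1.add (indm n).1, 2, fun ω => ?_⟩
          have e : ((1 - ε) • X + I) ω = ((1 - ε) • X) ω + I ω := rfl
          rw [e, abs_le]
          constructor <;> linarith [X0 ω, (X0 ω).1, (X0 ω).2, ind0 n ω, ind1 n ω]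
        have YE : Emu Y ≤ α := by
          have a1 := hm _ _ Sm Ym (fun ω => by
            change max _ _ ≤ ((1 - ε) • X) ω + I ω
            exact max_le (by linarith [ind0 n ω]) (by linarith [(X0 ω).1]))
          have a2 := hsub _ _ hsm (indm n)
          rw [hhom (1 - ε) (by linarith) X hX.1] at a2
          have a3 := mul_le_mul_of_nonneg_left hX.2.2 (by linarith : 0 ≤ 1 - ε)
          linarith
        have b1 := qaopt Y ⟨Ym, Y01, YE⟩
        rw [hQadec _ Ym, hQadec _ hXa.1] at b1
        have b2 : (1 - ε) * ∫ ω, X ω ∂Qc ≤ ∫ ω, Y ω ∂Qc := by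
          rw [← integral_const_mul]
          exact integral_mono ((integ X hX.1).const_mul _) (integ Y Ym)
            (fun ω => le_max_left _ _)
        have b3 := qpmono _ _ (indm n) Ym (fun ω => le_max_right _ _)
        have b4 := mul_le_mul_of_nonneg_left b2 hlam0
        have b5 := mul_le_mul_of_nonneg_left b3 (by linarith : 0 ≤ 1 - lam)
        have b6 := mul_le_mul_of_nonneg_left qpXa (by linarith : 0 ≤ 1 - lam)
        linarith
      have := le_of_tendsto ((Alim.const_mul (1 - lam)).const_add _) ev
      linarith
    have hcont : Tendsto (fun ε : ℝ => lam * ((1 - ε) * ∫ ω, X ω ∂Qc)) (𝓝[>] 0)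
        (𝓝 (lam * ((1 - 0) * ∫ ω, X ω ∂Qc))) := by
      apply Tendsto.mono_left _ nhdsWithin_le_nhds
      exact Continuous.tendsto (by fun_prop) 0
    have := le_of_tendsto hcont (by
      filter_upwards [Ioo_mem_nhdsGT (zero_lt_one' ℝ)] with ε he
      exact step ε he.1 he.2)
    simpa using this
  symm
  apply IsGreatest.csSup_eq
  refine ⟨⟨Xa, hXa, rfl⟩, ?_⟩
  rintro _ ⟨X, hX, rfl⟩
  exact key X hX
end

section
/- Assume that every X ∈ 𝒳_α with E_μ[X] < α satisfies E_{λQ_α^c}[X] < γ_α^c. If X_α ∈ 𝒳_α satisfies E_{λQ_α^c}[X_α] = γ_α^c (i.e. X_α solves Problem (4.3)), then X_α minimizes E_μ over 𝒴_α := {Y ∈ 𝒳 : 0 ≤ Y ≤ 1, E_{λQ_α^c}[Y] ≥ γ_α^c}, i.e. E_μ[X_α] = inf_{Y ∈ 𝒴_α} E_μ[Y]. -/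
open MeasureTheory Filter Topology
open scoped ENNReal

/-- Lemma 4.6: if every `X ∈ 𝒳_α` with `E_μ[X] < α` has `E_{λQ_α^c}[X] < γ_α^c`,
then any solution `X_α` of problem (4.3) minimizes `E_μ` over
`𝒴_α = {Y ∈ 𝒳 : 0 ≤ Y ≤ 1, E_{λQ_α^c}[Y] ≥ γ_α^c}`. -/
theorem optimal_minimizes_Emu {Ω : Type*} [MeasurableSpace Ω]
    (Emu Eups : (Ω → ℝ) → ℝ)
    (hEmu : IsSublinearOp Emu) (hEups : IsSublinearOp Eups)
    (α : ℝ) (hα0 : 0 < α) (hα1 : α < 1)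
    (lam : ℝ) (hlam0 : 0 ≤ lam) (hlam1 : lam ≤ 1)
    (Qc : Measure Ω) (hQc : IsProbabilityMeasure Qc)
    (Qp : (Ω → ℝ) → ℝ) (hQplin : IsLinearOp Qp)
    (hQppos : ∀ X : Ω → ℝ, MemX X → (∀ ω, 0 ≤ X ω) → 0 ≤ Qp X)
    (hQpone : Qp (fun _ => 1) = 1) (hQppure : PureAdditive Qp)
    (Qa : (Ω → ℝ) → ℝ) (hQalin : IsLinearOp Qa) (hQadom : Dominated Qa Eups)
    (hQasup : sSup (Qa '' testSet Emu α) = sSup (conjOp Eups '' testSet Emu α))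
    (hQadec : ∀ X : Ω → ℝ, MemX X → Qa X = lam * ∫ ω, X ω ∂Qc + (1 - lam) * Qp X)
    (γ : ℝ) (hγ : γ = sSup ((fun X : Ω → ℝ => lam * ∫ ω, X ω ∂Qc) '' testSet Emu α))
    (hstrict : ∀ X ∈ testSet Emu α, Emu X < α → lam * ∫ ω, X ω ∂Qc < γ)
    (Xa : Ω → ℝ) (hXa : Xa ∈ testSet Emu α)
    (hXopt : lam * ∫ ω, Xa ω ∂Qc = γ) :
    Emu Xa = sInf (Emu ''
      {Y : Ω → ℝ | MemX Y ∧ (∀ ω, 0 ≤ Y ω ∧ Y ω ≤ 1) ∧ γ ≤ lam * ∫ ω, Y ω ∂Qc}) := by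
  have hXeq : Emu Xa = α := by
    refine le_antisymm hXa.2.2 ?_
    by_contra h
    exact absurd hXopt (hstrict Xa hXa (not_le.mp h)).ne
  symm
  refine IsLeast.csInf_eq ⟨⟨Xa, ⟨hXa.1, hXa.2.1, hXopt.ge⟩, rfl⟩, ?_⟩
  rintro _ ⟨Y, ⟨hY, hY01, hYγ⟩, rfl⟩
  rw [hXeq]
  by_contra h
  have h' := not_le.mp h
  exact absurd hYγ (not_le.mpr (hstrict Y ⟨hY, hY01, h'.le⟩ h'))
end

section
/- Suppose X_α^0 ∈ 𝒳_α satisfies E_{λQ_α^c}[X_α^0] = γ_α^c and E_μ[X_α^0] < α. Then the set A := {ω ∈ Ω : X_α^0(ω) ≠ 1} satisfies λ·Q_α^c(A) = 0. -/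
open MeasureTheory Filter Topology
open scoped ENNReal

/-- Proposition 4.1: if a solution `X_α^0` of problem (4.3) satisfies
`E_μ[X_α^0] < α`, then the set `A = {X_α^0 ≠ 1}` satisfies `λ·Q_α^c(A) = 0`. -/
theorem slack_optimal_charges_one {Ω : Type*} [MeasurableSpace Ω]
    (Emu Eups : (Ω → ℝ) → ℝ)
    (hEmu : IsSublinearOp Emu) (hEups : IsSublinearOp Eups)
    (α : ℝ) (hα0 : 0 < α) (hα1 : α < 1)
    (lam : ℝ) (hlam0 : 0 ≤ lam) (hlam1 : lam ≤ 1)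
    (Qc : Measure Ω) (hQc : IsProbabilityMeasure Qc)
    (Qp : (Ω → ℝ) → ℝ) (hQplin : IsLinearOp Qp)
    (hQppos : ∀ X : Ω → ℝ, MemX X → (∀ ω, 0 ≤ X ω) → 0 ≤ Qp X)
    (hQpone : Qp (fun _ => 1) = 1) (hQppure : PureAdditive Qp)
    (Qa : (Ω → ℝ) → ℝ) (hQalin : IsLinearOp Qa) (hQadom : Dominated Qa Eups)
    (hQasup : sSup (Qa '' testSet Emu α) = sSup (conjOp Eups '' testSet Emu α))
    (hQadec : ∀ X : Ω → ℝ, MemX X → Qa X = lam * ∫ ω, X ω ∂Qc + (1 - lam) * Qp X)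
    (γ : ℝ) (hγ : γ = sSup ((fun X : Ω → ℝ => lam * ∫ ω, X ω ∂Qc) '' testSet Emu α))
    (Xa0 : Ω → ℝ) (hXa0 : Xa0 ∈ testSet Emu α)
    (hXopt : lam * ∫ ω, Xa0 ω ∂Qc = γ)
    (hslack : Emu Xa0 < α) :
    lam * (Qc {ω | Xa0 ω ≠ 1}).toReal = 0 := by
  obtain ⟨⟨hXm, M, hM⟩, hX01, hXα⟩ := hXa0
  obtain ⟨hmono, hconst, hsub, hhom⟩ := hEmu
  have hXX : MemX Xa0 := ⟨hXm, M, hM⟩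
  have hcm : ∀ c : ℝ, MemX (fun _ : Ω => c) := fun c => ⟨measurable_const, |c|, fun _ => le_rfl⟩
  have hE0 : 0 ≤ Emu Xa0 := by
    have h := hmono Xa0 (fun _ => 0) hXX (hcm 0) (fun ω => (hX01 ω).1)
    rwa [hconst] at h
  have hint : Integrable Xa0 Qc :=
    Integrable.of_bound hXm.aestronglyMeasurable M (Eventually.of_forall hM)
  set t : ℝ := α - Emu Xa0 with ht
  have ht0 : 0 < t := by linarith
  have ht1 : t < 1 := by linarith
  have hYm : Measurable ((1 - t) • Xa0) := hXm.const_smul (1 - t)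
  have hSX : MemX ((1 - t) • Xa0) := by
    refine ⟨hYm, 1, fun ω => ?_⟩
    have h1 := hX01 ω
    simp only [Pi.smul_apply, smul_eq_mul]
    rw [abs_le]
    constructor <;> nlinarith
  have hY : ((1 - t) • Xa0 + fun _ => t) ∈ testSet Emu α := by
    have hb : ∀ ω, 0 ≤ ((1 - t) • Xa0 + (fun _ => t) : Ω → ℝ) ω ∧ ((1 - t) • Xa0 + (fun _ => t) : Ω → ℝ) ω ≤ 1 := by
      intro ω
      have h1 := hX01 ω
      simp only [Pi.add_apply, Pi.smul_apply, smul_eq_mul]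
      constructor <;> nlinarith
    refine ⟨⟨hYm.add measurable_const, 1, fun ω => ?_⟩, hb, ?_⟩
    · rw [abs_le]
      constructor <;> linarith [(hb ω).1, (hb ω).2]
    · have h := hsub ((1 - t) • Xa0) (fun _ => t) hSX (hcm t)
      rw [hconst, hhom (1 - t) (by linarith) Xa0 hXX] at h
      nlinarith
  have hbdd : BddAbove ((fun X : Ω → ℝ => lam * ∫ ω, X ω ∂Qc) '' testSet Emu α) := by
    refine ⟨lam, ?_⟩
    rintro _ ⟨X, ⟨⟨hm, N, hN⟩, h01, -⟩, rfl⟩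
    have hi : Integrable X Qc :=
      Integrable.of_bound hm.aestronglyMeasurable N (Eventually.of_forall hN)
    have h : ∫ ω, X ω ∂Qc ≤ ∫ _, (1 : ℝ) ∂Qc :=
      integral_mono hi (integrable_const 1) (fun ω => (h01 ω).2)
    simp only [integral_const, probReal_univ, smul_eq_mul, mul_one] at h
    exact mul_le_of_le_one_right hlam0 h
  have hle := le_csSup hbdd (Set.mem_image_of_mem _ hY)
  rw [← hγ, ← hXopt] at hle
  have hIY : ∫ ω, ((1 - t) • Xa0 + (fun _ => t) : Ω → ℝ) ω ∂Qc = (1 - t) * ∫ ω, Xa0 ω ∂Qc + t := by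
    simp only [Pi.add_apply, Pi.smul_apply, smul_eq_mul]
    rw [integral_add (hint.const_mul _) (integrable_const _), integral_const_mul]
    simp
  simp only [hIY] at hle
  rcases hlam0.eq_or_lt with h0 | hpos
  · rw [← h0, zero_mul]
  have hI : 1 ≤ ∫ ω, Xa0 ω ∂Qc := by
    have h := le_of_mul_le_mul_left hle hpos
    by_contra hc
    push Not at hc
    nlinarith
  have hz : ∫ ω, (1 - Xa0 ω) ∂Qc = 0 := by
    apply le_antisymm
    · rw [integral_sub (integrable_const _) hint]
      simpa using hI
    · exact integral_nonneg fun ω => by simpa using (hX01 ω).2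
  have hae := (integral_eq_zero_iff_of_nonneg (fun ω => by simpa using (hX01 ω).2)
    ((integrable_const _).sub hint)).1 hz
  have hq : Qc {ω | Xa0 ω ≠ 1} = 0 := by
    have : ∀ᵐ ω ∂Qc, Xa0 ω = 1 := by
      filter_upwards [hae] with ω hω
      simp only [Pi.zero_apply, Pi.sub_apply] at hω
      linarith
    exact ae_iff.1 this
  rw [hq]
  simp
end

section
/- If there exists X_α^0 ∈ 𝒳_α with E_{λQ_α^c}[X_α^0] = γ_α^c and E_μ[X_α^0] < α, then γ_α^c = λ. -/
open MeasureTheory Filter Topology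
open scoped ENNReal

/-- Corollary 4.3: if there is a solution `X_α^0` of problem (4.3) with
`E_μ[X_α^0] < α`, then `γ_α^c = λ`. -/
theorem gamma_eq_lambda {Ω : Type*} [MeasurableSpace Ω]
    (Emu Eups : (Ω → ℝ) → ℝ)
    (hEmu : IsSublinearOp Emu) (hEups : IsSublinearOp Eups)
    (α : ℝ) (hα0 : 0 < α) (hα1 : α < 1)
    (lam : ℝ) (hlam0 : 0 ≤ lam) (hlam1 : lam ≤ 1)
    (Qc : Measure Ω) (hQc : IsProbabilityMeasure Qc)
    (Qp : (Ω → ℝ) → ℝ) (hQplin : IsLinearOp Qp)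
    (hQppos : ∀ X : Ω → ℝ, MemX X → (∀ ω, 0 ≤ X ω) → 0 ≤ Qp X)
    (hQpone : Qp (fun _ => 1) = 1) (hQppure : PureAdditive Qp)
    (Qa : (Ω → ℝ) → ℝ) (hQalin : IsLinearOp Qa) (hQadom : Dominated Qa Eups)
    (hQasup : sSup (Qa '' testSet Emu α) = sSup (conjOp Eups '' testSet Emu α))
    (hQadec : ∀ X : Ω → ℝ, MemX X → Qa X = lam * ∫ ω, X ω ∂Qc + (1 - lam) * Qp X)
    (γ : ℝ) (hγ : γ = sSup ((fun X : Ω → ℝ => lam * ∫ ω, X ω ∂Qc) '' testSet Emu α))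
    (hex : ∃ Xa0 ∈ testSet Emu α, lam * ∫ ω, Xa0 ω ∂Qc = γ ∧ Emu Xa0 < α) :
    γ = lam := by
  obtain ⟨X, ⟨hX, hX01, _⟩, hXγ, hXα⟩ := hex
  obtain ⟨hmono, hconst, hsub, hhom⟩ := hEmu
  have memc : ∀ c : ℝ, MemX (fun _ : Ω => c) := fun c =>
    ⟨measurable_const, |c|, fun _ => le_refl _⟩
  have memInt : ∀ Y : Ω → ℝ, MemX Y → Integrable Y Qc := by
    intro Y hY
    obtain ⟨hm, M, hM⟩ := hY
    exact Integrable.of_bound hm.aestronglyMeasurable M (Eventually.of_forall hM)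
  have intle : ∀ Y : Ω → ℝ, MemX Y → (∀ ω, Y ω ≤ 1) → ∫ ω, Y ω ∂Qc ≤ 1 := by
    intro Y hY h1
    have := integral_mono (memInt Y hY) (memInt _ (memc 1)) h1
    simpa using this
  have hup : γ ≤ lam := by
    rw [← hXγ]
    have := intle X hX (fun ω => (hX01 ω).2)
    nlinarith
  have ha0 : 0 ≤ Emu X := by
    have := hmono X (fun _ => 0) hX (memc 0) (fun ω => (hX01 ω).1)
    rwa [hconst] at this
  set t : ℝ := α - Emu X with ht
  have ht0 : 0 < t := by linarith
  have ht1 : t ≤ 1 := by linarith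
  have hsX : MemX ((1 - t) • X) := by
    refine ⟨hX.1.const_smul _, 1, fun ω => ?_⟩
    have h := hX01 ω
    rw [Pi.smul_apply, smul_eq_mul, abs_le]
    constructor <;> nlinarith
  have hY01 : ∀ ω, 0 ≤ ((1 - t) • X + fun _ => t : Ω → ℝ) ω ∧ ((1 - t) • X + fun _ => t : Ω → ℝ) ω ≤ 1 := by
    intro ω
    have h := hX01 ω
    simp only [Pi.add_apply, Pi.smul_apply, smul_eq_mul]
    constructor <;> nlinarith
  have hY : MemX ((1 - t) • X + fun _ => t) := by
    refine ⟨hsX.1.add measurable_const, 1, fun ω => ?_⟩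
    rw [abs_le]
    exact ⟨by linarith [(hY01 ω).1], (hY01 ω).2⟩
  have hYE : Emu ((1 - t) • X + fun _ => t) ≤ α := by
    have h1 := hsub _ _ hsX (memc t)
    rw [hconst, hhom _ (by linarith) X hX] at h1
    nlinarith
  have hbdd : BddAbove ((fun X : Ω → ℝ => lam * ∫ ω, X ω ∂Qc) '' testSet Emu α) := by
    refine ⟨lam, ?_⟩
    rintro _ ⟨Z, ⟨hZ, hZ01, _⟩, rfl⟩
    have := intle Z hZ (fun ω => (hZ01 ω).2)
    show lam * ∫ ω, Z ω ∂Qc ≤ lam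
    nlinarith
  have hle : lam * ∫ ω, ((1 - t) • X + fun _ => t : Ω → ℝ) ω ∂Qc ≤ γ := by
    rw [hγ]
    exact le_csSup hbdd ⟨_, ⟨hY, hY01, hYE⟩, rfl⟩
  have hint : ∫ ω, ((1 - t) • X + fun _ => t : Ω → ℝ) ω ∂Qc = (1 - t) * ∫ ω, X ω ∂Qc + t := by
    rw [integral_add' (memInt _ hsX) (memInt _ (memc t))]
    simp [integral_const_mul]
  rw [hint] at hle
  have : t * (lam - γ) ≤ 0 := by
    have e : lam * ((1 - t) * ∫ ω, X ω ∂Qc + t) = (1 - t) * γ + t * lam := by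
      rw [← hXγ]; ring
    rw [e] at hle
    linarith
  nlinarith
end

section
/- If there exists X_α^0 ∈ 𝒳_α with E_{λQ_α^c}[X_α^0] = γ_α^c and E_μ[X_α^0] < α, then every X_α ∈ 𝒳_α with E_{λQ_α^c}[X_α] = γ_α^c satisfies λ·Q_α^c(A) = 0, where A := {ω ∈ Ω : X_α(ω) ≠ 1}. -/
open MeasureTheory Filter Topology
open scoped ENNReal

/-- Corollary 4.4: if some solution of problem (4.3) has `E_μ < α`, then every
solution `X_α` of problem (4.3) satisfies `λ·Q_α^c({X_α ≠ 1}) = 0`. -/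
theorem all_optimal_charge_one {Ω : Type*} [MeasurableSpace Ω]
    (Emu Eups : (Ω → ℝ) → ℝ)
    (hEmu : IsSublinearOp Emu) (hEups : IsSublinearOp Eups)
    (α : ℝ) (hα0 : 0 < α) (hα1 : α < 1)
    (lam : ℝ) (hlam0 : 0 ≤ lam) (hlam1 : lam ≤ 1)
    (Qc : Measure Ω) (hQc : IsProbabilityMeasure Qc)
    (Qp : (Ω → ℝ) → ℝ) (hQplin : IsLinearOp Qp)
    (hQppos : ∀ X : Ω → ℝ, MemX X → (∀ ω, 0 ≤ X ω) → 0 ≤ Qp X)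
    (hQpone : Qp (fun _ => 1) = 1) (hQppure : PureAdditive Qp)
    (Qa : (Ω → ℝ) → ℝ) (hQalin : IsLinearOp Qa) (hQadom : Dominated Qa Eups)
    (hQasup : sSup (Qa '' testSet Emu α) = sSup (conjOp Eups '' testSet Emu α))
    (hQadec : ∀ X : Ω → ℝ, MemX X → Qa X = lam * ∫ ω, X ω ∂Qc + (1 - lam) * Qp X)
    (γ : ℝ) (hγ : γ = sSup ((fun X : Ω → ℝ => lam * ∫ ω, X ω ∂Qc) '' testSet Emu α))
    (hex : ∃ Xa0 ∈ testSet Emu α, lam * ∫ ω, Xa0 ω ∂Qc = γ ∧ Emu Xa0 < α)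
    (Xa : Ω → ℝ) (hXa : Xa ∈ testSet Emu α)
    (hXopt : lam * ∫ ω, Xa ω ∂Qc = γ) :
    lam * (Qc {ω | Xa ω ≠ 1}).toReal = 0 := by
  rcases hlam0.eq_or_lt with h0 | hpos
  · rw [← h0, zero_mul]
  obtain ⟨X0, hX0, hX0opt, hX0lt⟩ := hex
  obtain ⟨hmono, hconst, hsub, hhom⟩ := hEmu
  have memconst : ∀ c : ℝ, MemX (fun _ : Ω => c) := fun c =>
    ⟨measurable_const, |c|, fun _ => le_rfl⟩
  have hint : ∀ X : Ω → ℝ, MemX X → Integrable X Qc := by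
    rintro X ⟨hm, M, hM⟩
    exact Integrable.of_bound hm.aestronglyMeasurable M (Eventually.of_forall hM)
  obtain ⟨hX0m, hX0b, -⟩ := hX0
  have hm0 : 0 ≤ Emu X0 := by
    have h := hmono X0 (fun _ => 0) hX0m (memconst 0) (fun ω => (hX0b ω).1)
    rwa [hconst] at h
  obtain ⟨t, ht⟩ : ∃ t, t = α - Emu X0 := ⟨_, rfl⟩
  have ht0 : 0 < t := by linarith
  have ht1 : t < 1 := by linarith
  have hsm : MemX ((1 - t) • X0) := by
    refine ⟨hX0m.1.const_smul _, 1, fun ω => ?_⟩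
    have := hX0b ω
    simp only [Pi.smul_apply, smul_eq_mul]
    rw [abs_le]
    constructor <;> nlinarith
  have hb : ∀ ω, 0 ≤ ((1 - t) • X0 + (fun _ => t) : Ω → ℝ) ω ∧ ((1 - t) • X0 + (fun _ => t) : Ω → ℝ) ω ≤ 1 := by
    intro ω
    have := hX0b ω
    simp only [Pi.add_apply, Pi.smul_apply, smul_eq_mul]
    constructor <;> nlinarith
  have hYmem : ((1 - t) • X0 + (fun _ => t) : Ω → ℝ) ∈ testSet Emu α := by
    refine ⟨⟨hsm.1.add measurable_const, 1, fun ω => ?_⟩, hb, ?_⟩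
    · rw [abs_le]
      exact ⟨by linarith [(hb ω).1], (hb ω).2⟩
    · have h1 := hsub _ _ hsm (memconst t)
      rw [hconst, hhom (1 - t) (by linarith) X0 hX0m] at h1
      nlinarith
  have hle : ∀ X : Ω → ℝ, MemX X → (∀ ω, 0 ≤ X ω ∧ X ω ≤ 1) → ∫ ω, X ω ∂Qc ≤ 1 := by
    intro X hX hXb
    have h := integral_mono (hint X hX) (hint _ (memconst 1)) (fun ω => (hXb ω).2)
    simpa using h
  have hbdd : BddAbove ((fun X : Ω → ℝ => lam * ∫ ω, X ω ∂Qc) '' testSet Emu α) := by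
    refine ⟨lam, ?_⟩
    rintro _ ⟨X, hX, rfl⟩
    have := hle X hX.1 hX.2.1
    show lam * ∫ ω, X ω ∂Qc ≤ lam
    nlinarith
  have hY : lam * ∫ ω, ((1 - t) • X0 + (fun _ => t) : Ω → ℝ) ω ∂Qc ≤ γ := by
    rw [hγ]
    exact le_csSup hbdd ⟨_, hYmem, rfl⟩
  have hYint : ∫ ω, ((1 - t) • X0 + (fun _ => t) : Ω → ℝ) ω ∂Qc = (1 - t) * ∫ ω, X0 ω ∂Qc + t := by
    rw [integral_add' (hint _ hsm) (hint _ (memconst t))]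
    simp [integral_const_mul]
  rw [hYint] at hY
  have hX01 : 1 ≤ ∫ ω, X0 ω ∂Qc := by
    by_contra hlt
    push Not at hlt
    nlinarith [mul_pos (mul_pos hpos ht0) (sub_pos.2 hlt)]
  have hXa1 : ∫ ω, Xa ω ∂Qc = 1 := by
    apply le_antisymm (hle Xa hXa.1 hXa.2.1)
    have : ∫ ω, Xa ω ∂Qc = ∫ ω, X0 ω ∂Qc :=
      mul_left_cancel₀ hpos.ne' (hXopt.trans hX0opt.symm)
    rw [this]
    exact hX01
  have hz : ∫ ω, (1 - Xa ω) ∂Qc = 0 := by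
    rw [integral_sub (hint _ (memconst 1)) (hint _ hXa.1), hXa1]
    simp
  have hae := (integral_eq_zero_iff_of_nonneg (fun ω => sub_nonneg.2 (hXa.2.1 ω).2)
    ((hint _ (memconst 1)).sub (hint _ hXa.1))).1 hz
  have hq : Qc {ω | Xa ω ≠ 1} = 0 := by
    have h2 : ∀ᵐ ω ∂Qc, Xa ω = 1 := by
      filter_upwards [hae] with ω hω
      have h3 : 1 - Xa ω = 0 := hω
      linarith
    exact ae_iff.1 h2
  rw [hq]
  simp
end

section
/- If there exists X_α^0 ∈ 𝒳_α with E_{λQ_α^c}[X_α^0] = γ_α^c and E_μ[X_α^0] < α, then for every countably additive probability measure P on (Ω, F) and every X_α ∈ 𝒳_α with E_{λQ_α^c}[X_α] = γ_α^c, there exists a measurable function B : Ω → [0,1] such that, with the finite measure K := (P + λ·Q_α^c)/2 and the Radon–Nikodym derivative H := d(λQ_α^c)/dK, one has X_α = 1_{{H > 0}} + B·1_{{H = 0}} K-almost surely. -/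
open MeasureTheory Filter Topology
open scoped ENNReal

/-- Theorem (second case): if some solution of problem (4.3) has `E_μ < α`, then for
every probability measure `P` and every solution `X_α` of problem (4.3), with
`K = (P + λQ_α^c)/2` and `H = d(λQ_α^c)/dK`, one has
`X_α = 1_{{H > 0}} + B·1_{{H = 0}}`, `K`-a.s., for some `B : Ω → [0,1]`. -/
theorem neyman_pearson_form_second_case {Ω : Type*} [MeasurableSpace Ω]
    (Emu Eups : (Ω → ℝ) → ℝ)
    (hEmu : IsSublinearOp Emu) (hEups : IsSublinearOp Eups)
    (α : ℝ) (hα0 : 0 < α) (hα1 : α < 1)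
    (lam : ℝ) (hlam0 : 0 ≤ lam) (hlam1 : lam ≤ 1)
    (Qc : Measure Ω) (hQc : IsProbabilityMeasure Qc)
    (Qp : (Ω → ℝ) → ℝ) (hQplin : IsLinearOp Qp)
    (hQppos : ∀ X : Ω → ℝ, MemX X → (∀ ω, 0 ≤ X ω) → 0 ≤ Qp X)
    (hQpone : Qp (fun _ => 1) = 1) (hQppure : PureAdditive Qp)
    (Qa : (Ω → ℝ) → ℝ) (hQalin : IsLinearOp Qa) (hQadom : Dominated Qa Eups)
    (hQasup : sSup (Qa '' testSet Emu α) = sSup (conjOp Eups '' testSet Emu α))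
    (hQadec : ∀ X : Ω → ℝ, MemX X → Qa X = lam * ∫ ω, X ω ∂Qc + (1 - lam) * Qp X)
    (γ : ℝ) (hγ : γ = sSup ((fun X : Ω → ℝ => lam * ∫ ω, X ω ∂Qc) '' testSet Emu α))
    (hex : ∃ Xa0 ∈ testSet Emu α, lam * ∫ ω, Xa0 ω ∂Qc = γ ∧ Emu Xa0 < α) :
    ∀ P : Measure Ω, IsProbabilityMeasure P →
    ∀ Xa ∈ testSet Emu α, lam * ∫ ω, Xa ω ∂Qc = γ →
    ∃ B : Ω → ℝ, Measurable B ∧ (∀ ω, 0 ≤ B ω ∧ B ω ≤ 1) ∧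
    ∃ K : Measure Ω,
      K = ENNReal.ofReal (1 / 2) • P + ENNReal.ofReal (lam / 2) • Qc ∧
    ∃ H : Ω → ℝ≥0∞,
      H = (ENNReal.ofReal lam • Qc).rnDeriv K ∧
      ∀ᵐ ω ∂K, Xa ω =
        Set.indicator {ω' | 0 < H ω'} (fun _ => (1 : ℝ)) ω +
        B ω * Set.indicator {ω' | H ω' = 0} (fun _ => (1 : ℝ)) ω := by
  intro P hP Xa hXa hXaγ
  obtain ⟨X0, hX0, hX0γ, hX0lt⟩ := hex
  have hint : ∀ X ∈ testSet Emu α, Integrable X Qc := by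
    intro X hX
    refine Integrable.of_bound hX.1.1.aestronglyMeasurable 1 (ae_of_all _ fun ω => ?_)
    rw [Real.norm_eq_abs, abs_le]
    have := hX.2.1 ω
    constructor <;> linarith
  have hle1 : ∀ X ∈ testSet Emu α, ∫ ω, X ω ∂Qc ≤ 1 := by
    intro X hX
    have h := integral_mono (hint X hX) (integrable_const (1 : ℝ)) (fun ω => (hX.2.1 ω).2)
    simpa using h
  have hbdd : BddAbove ((fun X : Ω → ℝ => lam * ∫ ω, X ω ∂Qc) '' testSet Emu α) := by
    refine ⟨lam, ?_⟩
    rintro _ ⟨X, hX, rfl⟩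
    have := mul_le_mul_of_nonneg_left (hle1 X hX) hlam0
    simpa using this
  obtain ⟨hmono, hconst, hsub, hhom⟩ := hEmu
  have hlamγ : lam ≤ γ := by
    have he : 0 < 1 - Emu X0 := by linarith
    set t : ℝ := (α - Emu X0) / (1 - Emu X0) with ht
    have ht0 : 0 < t := div_pos (by linarith) he
    have ht1 : t ≤ 1 := by rw [ht, div_le_one he]; linarith
    have hte : t * (1 - Emu X0) = α - Emu X0 := div_mul_cancel₀ _ he.ne'
    have hm1 : MemX ((1 - t) • X0) := by
      refine ⟨hX0.1.1.const_smul _, 1, fun ω => ?_⟩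
      have := hX0.2.1 ω
      simp only [Pi.smul_apply, smul_eq_mul, abs_le]
      constructor <;> nlinarith
    have hm2 : MemX (fun _ : Ω => t) := ⟨measurable_const, |t|, fun _ => le_rfl⟩
    have hY : ((1 - t) • X0 + fun _ : Ω => t) ∈ testSet Emu α := by
      have hb : ∀ ω, 0 ≤ ((1 - t) • X0 + fun _ : Ω => t) ω ∧
          ((1 - t) • X0 + fun _ : Ω => t) ω ≤ 1 := by
        intro ω
        have := hX0.2.1 ω
        simp only [Pi.add_apply, Pi.smul_apply, smul_eq_mul]
        constructor <;> nlinarith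
      refine ⟨⟨hm1.1.add hm2.1, 1, fun ω => ?_⟩, hb, ?_⟩
      · rw [abs_le]
        have := hb ω
        constructor <;> linarith
      · have h1 := hsub _ _ hm1 hm2
        rw [hhom _ (by linarith) _ hX0.1, hconst] at h1
        linarith
    have h2 := le_csSup hbdd ⟨_, hY, rfl⟩
    rw [← hγ] at h2
    have h3 : ∫ ω, ((1 - t) • X0 + fun _ : Ω => t) ω ∂Qc = (1 - t) * ∫ ω, X0 ω ∂Qc + t := by
      simp only [Pi.add_apply, Pi.smul_apply, smul_eq_mul]
      rw [integral_add ((hint X0 hX0).const_mul _) (integrable_const _), integral_const_mul]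
      simp
    simp only [h3] at h2
    nlinarith
  have hae : (ENNReal.ofReal lam • Qc) {ω | Xa ω ≠ 1} = 0 := by
    rcases hlam0.eq_or_lt with h0 | h0
    · simp [← h0]
    · have h1 : ∫ ω, (1 - Xa ω) ∂Qc = 0 := by
        rw [integral_sub (integrable_const _) (hint Xa hXa)]
        have := hle1 Xa hXa
        simp
        nlinarith
      replace h1 := (integral_eq_zero_iff_of_nonneg (f := fun ω => 1 - Xa ω)
        (fun ω => by simpa using (hXa.2.1 ω).2)
        ((integrable_const _).sub (hint Xa hXa))).mp h1
      have h2 : ∀ᵐ ω ∂Qc, Xa ω = 1 := by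
        filter_upwards [h1] with ω hω
        simp only [Pi.zero_apply] at hω
        linarith
      rw [Measure.smul_apply, ae_iff.mp h2, smul_zero]
  refine ⟨Xa, hXa.1.1, hXa.2.1, _, rfl, _, rfl, ?_⟩
  set K : Measure Ω := ENNReal.ofReal (1 / 2) • P + ENNReal.ofReal (lam / 2) • Qc
  set ν : Measure Ω := ENNReal.ofReal lam • Qc
  have hs : MeasurableSet {ω | Xa ω ≠ 1} :=
    (measurableSet_eq_fun hXa.1.1 measurable_const).compl
  have h4 : ∫⁻ ω in {ω | Xa ω ≠ 1}, ν.rnDeriv K ω ∂K = 0 :=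
    le_antisymm ((Measure.setLIntegral_rnDeriv_le _).trans hae.le) zero_le
  rw [lintegral_eq_zero_iff (Measure.measurable_rnDeriv _ _)] at h4
  have h5 := (ae_restrict_iff' hs).mp h4
  filter_upwards [h5] with ω hω
  by_cases hH : ν.rnDeriv K ω = 0
  · simp [Set.indicator, hH]
  · have : Xa ω = 1 := by
      by_contra hne
      exact hH (hω hne)
    simp [Set.indicator, hH, this, pos_iff_ne_zero]
end
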